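/- arXiv:2101.12440 — 3 statements merged into one kernel-verified Lean document; each statement's English description precedes it below -/
import Mathlib

section
/- For n ≥ 2 and r ≥ 3n+2, with J_{nr} the ideal of k[x_1,x_2,x_3,x_4] generated by the binomials f_1, f_{2,i} (1≤i≤n), f_{3,j}, f_{4,j} (0≤j≤n−1), f_5, f_6, f_7 of the Backelin curve, the quotient k[x_1,x_2,x_3,x_4]/(J_{nr} + (x_3)) is a finite-dimensional k-vector space of dimension 3nr + 3n + 2r + 4. -/
open MvPolynomial

/-! Each Backelin binomial is a difference of two monomials, exactly one of which involves `x₃`.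
Modulo `x₃` the ideal is therefore the monomial ideal generated by all the monomials that occur in
the binomials, and the standard monomials form a basis of the quotient. They are the
`x₁ ^ a * x₂ ^ b * x₄ ^ d` with `(a, b, d)` in a staircase region, which is counted slice by slice
along `b`. -/

namespace Backelin

section MonomialIdeal

variable {σ : Type*}

/-- The exponents of the standard monomials of the monomial ideal generated by the `x ^ s` with
`s ∈ S`, i.e. of the monomials outside that ideal. -/
def standardExponents (S : Set (σ →₀ ℕ)) : Set (σ →₀ ℕ) :=
  {m | ∀ s ∈ S, ¬ s ≤ m}

lemma mem_standardExponents_insert_single {P : Set ((σ →₀ ℕ) × (σ →₀ ℕ))} {i : σ} {m : σ →₀ ℕ} :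
    m ∈ standardExponents (insert (Finsupp.single i 1) (Prod.fst '' P ∪ Prod.snd '' P)) ↔
      m i = 0 ∧ ∀ p ∈ P, ¬ p.1 ≤ m ∧ ¬ p.2 ≤ m := by
  simp only [standardExponents, Set.mem_ofPred_eq, Set.forall_mem_insert, Set.mem_union, or_imp,
    forall_and, Set.forall_mem_image, Finsupp.single_le_iff, Nat.lt_one_iff, not_le]

section CommSemiring

variable (R : Type*) [CommSemiring R]

/-- The linear map recording the coefficients of a polynomial at the standard exponents. -/
noncomputable def standardCoeff (S : Set (σ →₀ ℕ)) :
    MvPolynomial σ R →ₗ[R] standardExponents S →₀ R :=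
  Finsupp.lsubtypeDomain (standardExponents S) ∘ₗ (basisMonomials σ R).repr.toLinearMap

lemma standardCoeff_surjective (S : Set (σ →₀ ℕ)) : Function.Surjective (standardCoeff R S) := by
  classical
  exact (Function.RightInverse.surjective Finsupp.subtypeDomain_extendDomain).comp
    (basisMonomials σ R).repr.surjective

lemma ker_standardCoeff (S : Set (σ →₀ ℕ)) :
    LinearMap.ker (standardCoeff R S) =
      (Ideal.span ((fun s => monomial s (1 : R)) '' S)).restrictScalars R := by
  ext p
  calc p ∈ LinearMap.ker (standardCoeff R S)
    _ ↔ ∀ m ∈ standardExponents S, p.coeff m = 0 := Finsupp.ext_iff.trans Subtype.forall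
    _ ↔ ∀ m ∈ p.support, ∃ s ∈ S, s ≤ m := forall_congr' fun m => by
      rw [mem_support_iff, ← not_imp_comm]
      simp only [standardExponents, Set.mem_ofPred_eq, not_exists, not_and]
    _ ↔ p ∈ (Ideal.span ((fun s => monomial s (1 : R)) '' S)).restrictScalars R :=
      mem_ideal_span_monomial_image.symm

lemma monomial_mem_span_X {i : σ} {u : σ →₀ ℕ} (hu : u i ≠ 0) (c : R) :
    monomial u c ∈ Ideal.span {(X i : MvPolynomial σ R)} :=
  Ideal.mem_span_singleton.2 (X_dvd_monomial.2 (.inr hu))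

end CommSemiring

lemma span_sub_sup_eq_span_union_sup {A : Type*} [Ring A] {P : Set (A × A)} {I : Ideal A}
    (hP : ∀ p ∈ P, p.1 ∈ I ∨ p.2 ∈ I) :
    Ideal.span ((fun p => p.1 - p.2) '' P) ⊔ I =
      Ideal.span (Prod.fst '' P ∪ Prod.snd '' P) ⊔ I := by
  set J := Ideal.span ((fun p => p.1 - p.2) '' P)
  apply le_antisymm <;> refine sup_le (Ideal.span_le.2 ?_) le_sup_right
  · rintro _ ⟨p, hp, rfl⟩
    exact Ideal.mem_sup_left <| Ideal.sub_mem _ (Ideal.subset_span (.inl ⟨p, hp, rfl⟩))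
      (Ideal.subset_span (.inr ⟨p, hp, rfl⟩))
  · have mem_both {p : A × A} (hp : p ∈ P) : p.1 ∈ J ⊔ I ∧ p.2 ∈ J ⊔ I := by
      have hsub : p.1 - p.2 ∈ J ⊔ I := Ideal.mem_sup_left (Ideal.subset_span ⟨p, hp, rfl⟩)
      rcases hP p hp with h | h
      · have h₁ : p.1 ∈ J ⊔ I := Ideal.mem_sup_right h
        exact ⟨h₁, (Submodule.sub_mem_iff_right _ h₁).1 hsub⟩
      · have h₂ : p.2 ∈ J ⊔ I := Ideal.mem_sup_right h
        exact ⟨(Submodule.sub_mem_iff_left _ h₂).1 hsub, h₂⟩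
    rintro _ (⟨p, hp, rfl⟩ | ⟨p, hp, rfl⟩)
    exacts [(mem_both hp).1, (mem_both hp).2]

variable (R : Type*) [CommRing R]

/-- The basis of the quotient by a monomial ideal given by the standard monomials. -/
noncomputable def standardBasis (S : Set (σ →₀ ℕ)) :
    Module.Basis (standardExponents S) R
      (MvPolynomial σ R ⧸ Ideal.span ((fun s => monomial s (1 : R)) '' S)) :=
  .ofRepr <| (Submodule.Quotient.restrictScalarsEquiv R _).symm ≪≫ₗ
    Submodule.quotEquivOfEq _ _ (ker_standardCoeff R S).symm ≪≫ₗ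
    (standardCoeff R S).quotKerEquivOfSurjective (standardCoeff_surjective R S)

lemma span_monomial_sub_sup_span_X {P : Set ((σ →₀ ℕ) × (σ →₀ ℕ))} {i : σ}
    (hP : ∀ p ∈ P, p.1 i ≠ 0 ∨ p.2 i ≠ 0) :
    Ideal.span ((fun p => monomial p.1 (1 : R) - monomial p.2 1) '' P) ⊔ Ideal.span {X i} =
      Ideal.span ((fun s => monomial s 1) ''
        insert (Finsupp.single i 1) (Prod.fst '' P ∪ Prod.snd '' P)) := by
  have h := span_sub_sup_eq_span_union_sup (I := Ideal.span {(X i : MvPolynomial σ R)})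
    (P := Prod.map (monomial · 1) (monomial · 1) '' P) (by
      rintro _ ⟨p, hp, rfl⟩
      exact (hP p hp).imp (monomial_mem_span_X R · 1) (monomial_mem_span_X R · 1))
  simp only [Set.image_image, Prod.map_fst, Prod.map_snd] at h
  rw [h, Set.image_insert_eq, Ideal.span_insert, sup_comm, Set.image_union, Set.image_image,
    Set.image_image, X]

end MonomialIdeal

section Binomials

/-- The exponent of the monomial `x₁ ^ a * x₂ ^ b * x₃ ^ c * x₄ ^ d`. -/
noncomputable def exponent (a b c d : ℕ) : Fin 4 →₀ ℕ :=
  Finsupp.equivFunOnFinite.symm ![a, b, c, d]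

lemma exponent_le_iff {a b c d : ℕ} {m : Fin 4 →₀ ℕ} :
    exponent a b c d ≤ m ↔ a ≤ m 0 ∧ b ≤ m 1 ∧ c ≤ m 2 ∧ d ≤ m 3 := by
  simp [Finsupp.le_def, Fin.forall_fin_succ, exponent]

lemma eq_exponent_iff {a b c d : ℕ} {m : Fin 4 →₀ ℕ} :
    m = exponent a b c d ↔ m 0 = a ∧ m 1 = b ∧ m 2 = c ∧ m 3 = d := by
  simp [Finsupp.ext_iff, Fin.forall_fin_succ, exponent]

/-- The binomials `f₁`, `f₂ᵢ`, `f₃ⱼ`, `f₄ⱼ`, `f₅`, `f₆`, `f₇` generating the ideal `J_{nr}` of the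
Backelin curve, over an arbitrary ring. The variables `x₁, …, x₄` are `X 0, …, X 3`, and no
subtraction in the exponents truncates when `1 ≤ n`, `2 * n ≤ r` and `3 * n ≤ r + 2`. -/
def binomials (R : Type*) [CommRing R] (n r : ℕ) : Set (MvPolynomial (Fin 4) R) :=
  {g | g = X 1 * X 2 ^ 3 - X 0 * X 3 ^ 3 ∨
    (∃ i, 1 ≤ i ∧ i ≤ n ∧
      g = X 0 ^ (n - i) * X 2 ^ (3 * i - 1) - X 1 ^ (n - i + 1) * X 3 ^ (3 * i - 2)) ∨
    (∃ j, j ≤ n - 1 ∧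
      g = X 0 ^ (r - n + 3 + j) * X 1 ^ (n - 1 - j) - X 2 ^ (2 + 3 * j) * X 3 ^ (r - 1 - 3 * j)) ∨
    (∃ j, j ≤ n - 1 ∧
      g = X 0 ^ (r - 2 * n + 3 + j) * X 1 ^ (2 * n - j) -
        X 2 ^ (3 * j + 1) * X 3 ^ (r + 1 - 3 * j)) ∨
    g = X 0 ^ (r - n + 2) * X 1 ^ n * X 2 - X 3 ^ (r + 2) ∨
    g = X 1 ^ (n + 1) * X 2 - X 0 ^ n * X 3 ^ 2 ∨
    g = X 1 ^ (2 * n + 1) - X 0 ^ (2 * n - 1) * X 2 * X 3}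

/-- The pairs `(u, v)` such that `x ^ u - x ^ v` is one of the Backelin binomials. -/
def exponentPairs (n r : ℕ) : Set ((Fin 4 →₀ ℕ) × (Fin 4 →₀ ℕ)) :=
  {(exponent 0 1 3 0, exponent 1 0 0 3)} ∪
  (fun i => (exponent (n - i) 0 (3 * i - 1) 0, exponent 0 (n - i + 1) 0 (3 * i - 2))) ''
    Set.Icc 1 n ∪
  (fun j => (exponent (r - n + 3 + j) (n - 1 - j) 0 0,
    exponent 0 0 (2 + 3 * j) (r - 1 - 3 * j))) '' Set.Iic (n - 1) ∪
  (fun j => (exponent (r - 2 * n + 3 + j) (2 * n - j) 0 0,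
    exponent 0 0 (3 * j + 1) (r + 1 - 3 * j))) '' Set.Iic (n - 1) ∪
  {(exponent (r - n + 2) n 1 0, exponent 0 0 0 (r + 2))} ∪
  {(exponent 0 (n + 1) 1 0, exponent n 0 0 2)} ∪
  {(exponent 0 (2 * n + 1) 0 0, exponent (2 * n - 1) 0 1 1)}

lemma monomial_exponent (R : Type*) [CommSemiring R] (a b c d : ℕ) :
    monomial (exponent a b c d) (1 : R) = X 0 ^ a * X 1 ^ b * X 2 ^ c * X 3 ^ d := by
  simp [monomial_eq, exponent, Finsupp.prod_fintype, Fin.prod_univ_four]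

lemma binomials_eq_image (R : Type*) [CommRing R] (n r : ℕ) :
    binomials R n r = (fun p => monomial p.1 1 - monomial p.2 1) '' exponentPairs n r := by
  ext g
  simp only [binomials, exponentPairs, Set.image_union, Set.image_singleton, Set.image_image,
    Set.mem_union, Set.mem_image, Set.mem_singleton_iff, Set.mem_ofPred_eq, Set.mem_Icc,
    Set.mem_Iic, monomial_exponent, pow_zero, pow_one, one_mul, mul_one, and_assoc, or_assoc,
    eq_comm (a := g)]

lemma apply_two_ne_zero_of_mem_exponentPairs {n r : ℕ} :
    ∀ p ∈ exponentPairs n r, p.1 2 ≠ 0 ∨ p.2 2 ≠ 0 := by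
  rintro _ ((((((rfl | ⟨i, ⟨hi, -⟩, rfl⟩) | ⟨j, -, rfl⟩) | ⟨j, -, rfl⟩) | rfl) | rfl) | rfl)
  case inl.inl.inl.inl.inl.inr => exact .inl (show 3 * i - 1 ≠ 0 by omega)
  all_goals simp [exponent]

end Binomials

section Staircase

variable {n r : ℕ}

/-- For `b ≤ 2 * n` and `3 ≤ d`, the monomial `x₂ ^ b * x₄ ^ d` is standard exactly when
`d < columnHeight n r b`. The subtraction truncates on purpose: the value is `1` for `n ≤ b`. -/
def columnHeight (n r b : ℕ) : ℕ :=
  if b = 0 then r + 2 else 3 * (n - b) + 1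

/-- The number of standard monomials `x₁ ^ a * x₂ ^ b * x₄ ^ d` with `b` and `d` fixed: they are
those with `a < rowLength n r b d`. -/
def rowLength (n r b : ℕ) : ℕ → ℕ
  | 0 => if b < n then r + 2 - b else if b ≤ 2 * n then r + 3 - b else 0
  | 1 => if b < n then r + 2 - b else 0
  | 2 => if b < n then n else 0
  | d + 3 => if d + 3 < columnHeight n r b then 1 else 0

-- The conjuncts on the right come from `f₁`, `f₂`, `f₃`, `f₄`, `f₅`, `f₆` and `f₇`, in this order.
lemma lt_rowLength_iff {a b d : ℕ} (hn : 1 ≤ n) (hr : 3 * n ≤ r + 2) :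
    a < rowLength n r b d ↔
      ¬ (1 ≤ a ∧ 3 ≤ d) ∧ (b = 0 ∨ d ≤ 3 * (n - b)) ∧ a + min b (n - 1) < r + 2 ∧
        (b ≤ n ∨ a + min b (2 * n) < r + 3) ∧ d < r + 2 ∧ ¬ (n ≤ a ∧ 2 ≤ d) ∧ b ≤ 2 * n := by
  match d with
  | 0 | 1 | 2 | d + 3 => simp only [rowLength, columnHeight]; split_ifs <;> omega

section

variable {m : Fin 4 →₀ ℕ}

lemma forall_not_le_f₂_iff (hn : 1 ≤ n) (hm : m 2 = 0) :
    (∀ ⦃i⦄, i ∈ Set.Icc 1 n → ¬ exponent (n - i) 0 (3 * i - 1) 0 ≤ m ∧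
      ¬ exponent 0 (n - i + 1) 0 (3 * i - 2) ≤ m) ↔ m 1 = 0 ∨ m 3 ≤ 3 * (n - m 1) := by
  simp only [exponent_le_iff, hm, Set.mem_Icc]
  refine ⟨fun h => ?_, fun h i _ => by omega⟩
  have := @h (n + 1 - min (m 1) n)
  omega

lemma forall_not_le_f₃_iff (hn : 1 ≤ n) (hr : n ≤ r) (hm : m 2 = 0) :
    (∀ ⦃j⦄, j ∈ Set.Iic (n - 1) → ¬ exponent (r - n + 3 + j) (n - 1 - j) 0 0 ≤ m ∧
      ¬ exponent 0 0 (2 + 3 * j) (r - 1 - 3 * j) ≤ m) ↔ m 0 + min (m 1) (n - 1) < r + 2 := by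
  simp only [exponent_le_iff, hm, Set.mem_Iic]
  refine ⟨fun h => ?_, fun h j _ => by omega⟩
  have := @h (n - 1 - min (m 1) (n - 1))
  omega

lemma forall_not_le_f₄_iff (hn : 1 ≤ n) (hr : 2 * n ≤ r) (hm : m 2 = 0) :
    (∀ ⦃j⦄, j ∈ Set.Iic (n - 1) → ¬ exponent (r - 2 * n + 3 + j) (2 * n - j) 0 0 ≤ m ∧
      ¬ exponent 0 0 (3 * j + 1) (r + 1 - 3 * j) ≤ m) ↔
      m 1 ≤ n ∨ m 0 + min (m 1) (2 * n) < r + 3 := by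
  simp only [exponent_le_iff, hm, Set.mem_Iic]
  refine ⟨fun h => ?_, fun h j _ => by omega⟩
  have := @h (2 * n - min (m 1) (2 * n))
  omega

lemma mem_standardExponents_iff (hn : 1 ≤ n) (hnr : 2 * n ≤ r) (hr : 3 * n ≤ r + 2) :
    m ∈ standardExponents (insert (Finsupp.single 2 1)
      (Prod.fst '' exponentPairs n r ∪ Prod.snd '' exponentPairs n r)) ↔
      m 2 = 0 ∧ m 0 < rowLength n r (m 1) (m 3) := by
  rw [mem_standardExponents_insert_single, and_congr_right_iff]
  intro hm
  simp only [exponentPairs, Set.mem_union, Set.mem_singleton_iff, forall₂_or_left, forall_eq,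
    Set.forall_mem_image]
  rw [forall_not_le_f₂_iff hn hm, forall_not_le_f₃_iff hn (by omega) hm,
    forall_not_le_f₄_iff hn hnr hm, lt_rowLength_iff hn hr]
  simp only [exponent_le_iff, hm]
  omega

end

/-- The points `⟨b, d, a⟩` such that the monomial `x₁ ^ a * x₂ ^ b * x₄ ^ d` is standard. -/
def staircase (n r : ℕ) : Finset (Σ _ : ℕ, Σ _ : ℕ, ℕ) :=
  (Finset.range (2 * n + 1)).sigma fun b =>
    (Finset.range (r + 2)).sigma fun d => Finset.range (rowLength n r b d)

lemma mem_staircase {b d a : ℕ} (hr : 3 * n ≤ r + 2) :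
    ⟨b, d, a⟩ ∈ staircase n r ↔ a < rowLength n r b d := by
  simp only [staircase, Finset.mem_sigma, Finset.mem_range, and_iff_right_iff_imp, ← and_assoc]
  match d with
  | 0 | 1 | 2 | d + 3 => simp only [rowLength, columnHeight]; split_ifs <;> omega

lemma standardExponents_eq_image_staircase (hn : 1 ≤ n) (hnr : 2 * n ≤ r) (hr : 3 * n ≤ r + 2) :
    standardExponents (insert (Finsupp.single 2 1)
      (Prod.fst '' exponentPairs n r ∪ Prod.snd '' exponentPairs n r)) =
      (fun t => exponent t.2.2 t.1 0 t.2.1) '' (staircase n r : Set (Σ _ : ℕ, Σ _ : ℕ, ℕ)) := by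
  ext m
  rw [mem_standardExponents_iff hn hnr hr]
  constructor
  · rintro ⟨hm, hlt⟩
    exact ⟨⟨m 1, m 3, m 0⟩, (mem_staircase hr).2 hlt,
      (eq_exponent_iff.2 ⟨rfl, rfl, hm, rfl⟩).symm⟩
  · rintro ⟨⟨b, d, a⟩, ht, rfl⟩
    exact ⟨rfl, (mem_staircase hr).1 ht⟩

lemma exponent_zero_injective :
    Function.Injective fun t : Σ _ : ℕ, Σ _ : ℕ, ℕ => exponent t.2.2 t.1 0 t.2.1 := by
  rintro ⟨b, d, a⟩ ⟨b', d', a'⟩ h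
  obtain ⟨rfl, rfl, -, rfl⟩ := eq_exponent_iff.1 h
  rfl

end Staircase

section Counting

variable {n r : ℕ}

lemma sum_range_ite_lt (N h : ℕ) : ∑ d ∈ Finset.range N, (if d < h then 1 else 0) = min N h := by
  have : {d ∈ Finset.range N | d < h} = Finset.range (min N h) := by
    ext d
    simp only [Finset.mem_filter, Finset.mem_range, lt_inf_iff]
  rw [← Finset.card_filter, this, Finset.card_range]

lemma two_mul_sum_range_sub_mul {K : Type*} [CommRing K] (A B : K) (m : ℕ) :
    2 * ∑ b ∈ Finset.range m, (A - B * b) = m * (2 * A - B * (m - 1)) := by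
  induction m with
  | zero => simp
  | succ m ih =>
    rw [Finset.sum_range_succ, mul_add, ih]
    push_cast
    ring

/-- The number of standard monomials `x₁ ^ a * x₂ ^ b * x₄ ^ d` with `b` fixed; they all
satisfy `d < r + 2` because of `f₅`. -/
def sliceCard (n r b : ℕ) : ℕ :=
  ∑ d ∈ Finset.range (r + 2), rowLength n r b d

lemma sliceCard_of_lt {b : ℕ} (hr : 3 * n ≤ r + 2) (hb : b < n) :
    sliceCard n r b = 2 * (r + 2 - b) + n + (columnHeight n r b - 3) := by
  obtain ⟨N, rfl⟩ : ∃ N, r = N + 1 := Nat.exists_eq_add_of_le' (by omega)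
  have hheight : columnHeight n (N + 1) b - 3 ≤ N := by
    unfold columnHeight
    split_ifs <;> omega
  have hcolumn : ∑ d ∈ Finset.range N, rowLength n (N + 1) b (d + 3) =
      columnHeight n (N + 1) b - 3 := by
    rw [← min_eq_right hheight, ← sum_range_ite_lt]
    simp only [rowLength, Nat.lt_sub_iff_add_lt]
  rw [sliceCard, Finset.sum_range_succ', Finset.sum_range_succ', Finset.sum_range_succ', hcolumn]
  simp only [rowLength, if_pos hb]
  omega

lemma sliceCard_zero (hn : 1 ≤ n) (hr : 3 * n ≤ r + 2) : sliceCard n r 0 = 3 * r + n + 3 := by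
  simp only [sliceCard_of_lt hr hn, columnHeight, if_pos]
  omega

lemma sliceCard_succ_of_lt {b : ℕ} (hr : 3 * n ≤ r + 2) (hb : b + 1 < n) :
    sliceCard n r (b + 1) = 2 * r + 4 * n - 3 - 5 * b := by
  simp only [sliceCard_of_lt hr hb, columnHeight, if_neg b.succ_ne_zero]
  omega

lemma sliceCard_of_le {b : ℕ} (hnb : n ≤ b) (hb_pos : 1 ≤ b) (hb : b ≤ 2 * n) :
    sliceCard n r b = r + 3 - b := by
  rw [sliceCard, Finset.sum_range_succ', Finset.sum_eq_zero]
  · simp only [rowLength]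
    split_ifs <;> omega
  · rintro (_ | _ | d) - <;> simp only [rowLength, columnHeight] <;> split_ifs <;> omega

lemma card_staircase_eq_sum :
    (staircase n r).card = ∑ b ∈ Finset.range (2 * n + 1), sliceCard n r b := by
  simp only [staircase, Finset.card_sigma, Finset.card_range, sliceCard]

lemma card_staircase (hn : 1 ≤ n) (hr : 3 * n ≤ r + 2) :
    (staircase n r).card = 3 * n * r + 3 * n + 2 * r + 4 := by
  obtain ⟨m, rfl⟩ := Nat.exists_eq_add_of_le' hn
  have hlow : ∑ b ∈ Finset.range m, (sliceCard (m + 1) r (b + 1) : ℤ) =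
      ∑ b ∈ Finset.range m, ((2 * r + 4 * m + 1 : ℤ) - 5 * b) := by
    refine Finset.sum_congr rfl fun b hb => ?_
    have hbm := Finset.mem_range.1 hb
    rw [sliceCard_succ_of_lt hr (Nat.succ_lt_succ hbm)]
    omega
  have hhigh : ∑ b ∈ Finset.range (m + 2), (sliceCard (m + 1) r (m + 1 + b) : ℤ) =
      ∑ b ∈ Finset.range (m + 2), ((r + 2 - m : ℤ) - 1 * b) := by
    refine Finset.sum_congr rfl fun b hb => ?_
    have hbm := Finset.mem_range.1 hb
    rw [sliceCard_of_le (by omega) (by omega) (by omega)]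
    omega
  have hlow_sum := two_mul_sum_range_sub_mul (2 * r + 4 * m + 1 : ℤ) 5 m
  have hhigh_sum := two_mul_sum_range_sub_mul (r + 2 - m : ℤ) 1 (m + 2)
  rw [← hlow] at hlow_sum
  rw [← hhigh] at hhigh_sum
  rw [card_staircase_eq_sum, show 2 * (m + 1) + 1 = m + 1 + (m + 2) by ring,
    Finset.sum_range_add, Finset.sum_range_succ', sliceCard_zero hn hr]
  zify
  push_cast at hhigh_sum ⊢
  linarith

end Counting

end Backelin

open Backelin in
theorem backelin_quotient_dimension_general (R : Type*) [CommRing R] [Nontrivial R] (n r : ℕ)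
    (hn : 1 ≤ n) (hnr : 2 * n ≤ r) (hr : 3 * n ≤ r + 2) :
    letI Q := MvPolynomial (Fin 4) R ⧸ (Ideal.span (binomials R n r) ⊔ Ideal.span {X 2})
    Module.Free R Q ∧ Module.Finite R Q ∧
      Module.finrank R Q = 3 * n * r + 3 * n + 2 * r + 4 := by
  rw [binomials_eq_image, span_monomial_sub_sup_span_X R apply_two_ne_zero_of_mem_exponentPairs]
  have hstandard := standardExponents_eq_image_staircase hn hnr hr
  let basis := standardBasis R (insert (Finsupp.single 2 1)
    (Prod.fst '' exponentPairs n r ∪ Prod.snd '' exponentPairs n r))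
  have hfinite := ((staircase n r).finite_toSet.image _).subset hstandard.subset
  have := hfinite.to_subtype
  refine ⟨.of_basis basis, .of_basis basis, ?_⟩
  rw [Module.finrank_eq_nat_card_basis basis, Nat.card_coe_set_eq, hstandard,
    Set.ncard_image_of_injective _ exponent_zero_injective, Set.ncard_coe_finset,
    card_staircase hn hr]

/-- For the ideal `J_{nr}` generated by the Backelin binomials, the quotient
`k[x₁,…,x₄]/(J_{nr} + (x₃))` is a `k`-vector space of dimension
`3nr + 3n + 2r + 4`. -/
theorem backelin_quotient_dimension
    (k : Type*) [Field k] (n r : ℕ) (hn : 2 ≤ n) (hr : 3 * n + 2 ≤ r) :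
    letI x₁ : MvPolynomial (Fin 4) k := X 0
    letI x₂ : MvPolynomial (Fin 4) k := X 1
    letI x₃ : MvPolynomial (Fin 4) k := X 2
    letI x₄ : MvPolynomial (Fin 4) k := X 3
    letI S : Set (MvPolynomial (Fin 4) k) :=
      {g | g = x₂ * x₃ ^ 3 - x₁ * x₄ ^ 3 ∨
        (∃ i, 1 ≤ i ∧ i ≤ n ∧
          g = x₁ ^ (n - i) * x₃ ^ (3 * i - 1) - x₂ ^ (n - i + 1) * x₄ ^ (3 * i - 2)) ∨
        (∃ j, j ≤ n - 1 ∧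
          g = x₁ ^ (r - n + 3 + j) * x₂ ^ (n - 1 - j) - x₃ ^ (2 + 3 * j) * x₄ ^ (r - 1 - 3 * j)) ∨
        (∃ j, j ≤ n - 1 ∧
          g = x₁ ^ (r - 2 * n + 3 + j) * x₂ ^ (2 * n - j) - x₃ ^ (3 * j + 1) * x₄ ^ (r + 1 - 3 * j)) ∨
        g = x₁ ^ (r - n + 2) * x₂ ^ n * x₃ - x₄ ^ (r + 2) ∨
        g = x₂ ^ (n + 1) * x₃ - x₁ ^ n * x₄ ^ 2 ∨
        g = x₂ ^ (2 * n + 1) - x₁ ^ (2 * n - 1) * x₃ * x₄}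
    letI J : Ideal (MvPolynomial (Fin 4) k) := Ideal.span S
    Module.Finite k (MvPolynomial (Fin 4) k ⧸ (J ⊔ Ideal.span {x₃})) ∧
      Module.finrank k (MvPolynomial (Fin 4) k ⧸ (J ⊔ Ideal.span {x₃})) =
        3 * n * r + 3 * n + 2 * r + 4 := by
  exact (backelin_quotient_dimension_general k n r (by omega) (by omega) (by omega)).2
end

section
/- The projective closure of the Backelin curve C(s, s+3, s+3n+1, s+3n+2), for n ≥ 2, r ≥ 3n+2, s = r(3n+2)+3, is arithmetically Cohen–Macaulay, i.e., the homogenization of its defining toric ideal with respect to x_0 is a Cohen–Macaulay ideal in k[x_0,x_1,x_2,x_3,x_4]. -/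
set_option maxHeartbeats 1000000
set_option synthInstance.maxHeartbeats 400000

open MvPolynomial

/-!
The coordinate ring of a projective monomial curve is the semigroup ring of a semigroup
`S ⊆ ℕ²` containing multiples of both unit vectors. It is integral inside `k[y, z]`, hence of
dimension two, and the two corresponding coordinates `x₀, x₄` form a regular sequence as soon as
`u + w₄ ∈ S + w₀` implies `u ∈ S + w₀` for `u ∈ S`. For the exponents
`s, s + 3, s + 3n + 1, s + 3n + 2` with `s` large this follows by rewriting an element of `S` of
large weight, without increasing its degree, until it involves the largest exponent.
-/

section RegularSequence

theorem isRegular_pair {R : Type*} [CommRing R] {x y : R} (hx : IsSMulRegular R x)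
    (hxy : ∀ f, x ∣ y * f → x ∣ f) (hne : Ideal.span {x, y} ≠ ⊤) :
    RingTheory.Sequence.IsRegular R [x, y] where
  toIsWeaklyRegular := by
    rw [RingTheory.Sequence.isWeaklyRegular_cons_iff,
      RingTheory.Sequence.isWeaklyRegular_singleton_iff, isSMulRegular_quotient_iff_mem_of_smul_mem]
    simp only [Submodule.mem_smul_pointwise_iff_exists, Submodule.mem_top, true_and, smul_eq_mul]
    exact ⟨hx, fun f ⟨g, hg⟩ => (hxy f ⟨g, hg.symm⟩).imp fun _ => Eq.symm⟩
  top_ne_smul := by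
    simpa [Ideal.ofList_singleton, ← Ideal.span_insert] using hne.symm

end RegularSequence

section KrullDimension

theorem ringKrullDim_eq_of_isIntegral (R S : Type*) [CommRing R] [CommRing S] [Algebra R S]
    [Algebra.IsIntegral R S] [FaithfulSMul R S] : ringKrullDim R = ringKrullDim S := by
  have hinj := FaithfulSMul.algebraMap_injective R S
  apply le_antisymm
  · refine iSup_le fun l => ?_
    obtain ⟨P, -, _, hP⟩ := Ideal.exists_ideal_over_prime_of_isIntegral (S := S)
      l.head.asIdeal ⊥ (by
        rw [← RingHom.ker_eq_comap_bot, (RingHom.injective_iff_ker_eq_bot _).1 hinj]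
        exact bot_le)
    have : P.LiesOver l.head.asIdeal := ⟨hP.symm⟩
    obtain ⟨L, hL, -⟩ := Ideal.exists_ltSeries_of_hasGoingUp l P
    exact hL ▸ Order.LTSeries.length_le_krullDim L
  · exact Order.krullDim_le_of_strictMono (PrimeSpectrum.comap (algebraMap R S))
      fun _ _ hIJ => Ideal.IsIntegral.comap_lt_comap hIJ

theorem ringKrullDim_quotient_ker_of_isIntegral {R S : Type*} [CommRing R] [CommRing S]
    {φ : R →+* S} (hφ : φ.IsIntegral) : ringKrullDim (R ⧸ RingHom.ker φ) = ringKrullDim S := by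
  let : Algebra (R ⧸ RingHom.ker φ) S := φ.kerLift.toAlgebra
  have : Algebra.IsIntegral (R ⧸ RingHom.ker φ) S :=
    ⟨RingHom.IsIntegral.tower_top (Ideal.Quotient.mk _) φ.kerLift hφ⟩
  have : FaithfulSMul (R ⧸ RingHom.ker φ) S :=
    (faithfulSMul_iff_algebraMap_injective _ _).2 φ.kerLift_injective
  exact ringKrullDim_eq_of_isIntegral _ _

end KrullDimension

section Toric

variable {ι τ k : Type*}

/-- The monomial parametrization `x_i ↦ t ^ w_i` with exponent vectors `w_i`. Its image is the
semigroup ring of the semigroup generated by the `w_i`. -/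
noncomputable def toricMap (k : Type*) [CommSemiring k] (w : ι → τ →₀ ℕ) :
    MvPolynomial ι k →ₐ[k] MvPolynomial τ k :=
  aeval fun i => monomial (w i) 1

/-- The toric ideal of the exponent vectors `w_i`: the relations among the monomials `t ^ w_i`. -/
noncomputable abbrev toricIdeal (k : Type*) [CommRing k] (w : ι → τ →₀ ℕ) :
    Ideal (MvPolynomial ι k) :=
  RingHom.ker (toricMap k w).toRingHom

/-- The combinatorial form of "`x_i, x_j` is a regular sequence" on the toric ring of `w`: if `u`
lies in the semigroup `S` generated by the `w_i` and `u + w_j ∈ S + w_i`, then `u ∈ S + w_i`. -/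
def IsSemigroupRegularPair (w : ι → τ →₀ ℕ) (i j : ι) : Prop :=
  ∀ d e : ι →₀ ℕ, Finsupp.weight w d + w j = Finsupp.weight w e + w i →
    ∃ f : ι →₀ ℕ, Finsupp.weight w d = Finsupp.weight w f + w i

variable {w : ι → τ →₀ ℕ}

section CommSemiring

variable [CommSemiring k]

@[simp]
theorem toricMap_X (i : ι) : toricMap k w (X i) = monomial (w i) 1 :=
  aeval_X _ i

theorem toricMap_monomial (d : ι →₀ ℕ) (c : k) :
    toricMap k w (monomial d c) = monomial (Finsupp.weight w d) c := by
  simp only [toricMap, aeval_monomial, monomial_pow, one_pow, algebraMap_eq, Finsupp.weight_apply,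
    Finsupp.prod, ← monomial_sum_one, C_mul_monomial, mul_one, Finsupp.sum]

theorem mem_range_toricMap_iff {p : MvPolynomial τ k} :
    p ∈ (toricMap k w).range ↔ ∀ u ∈ p.support, ∃ d : ι →₀ ℕ, Finsupp.weight w d = u := by
  classical
  constructor
  · rintro ⟨q, rfl⟩ u hu
    change u ∈ (toricMap k w q).support at hu
    rw [q.as_sum, map_sum] at hu
    obtain ⟨d, -, hd⟩ := Finset.mem_biUnion.1 (support_sum hu)
    rw [toricMap_monomial] at hd
    exact ⟨d, (Finset.mem_singleton.1 (support_monomial_subset hd)).symm⟩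
  · intro h
    rw [p.as_sum]
    refine sum_mem fun u hu => ?_
    obtain ⟨d, rfl⟩ := h u hu
    exact ⟨monomial d _, toricMap_monomial d _⟩

end CommSemiring

theorem IsSemigroupRegularPair.exists_toricMap_eq [CommRing k] {i j : ι}
    (h : IsSemigroupRegularPair w i j) {f g : MvPolynomial ι k}
    (hfg : toricMap k w (X j * f) = toricMap k w (X i * g)) :
    ∃ q, toricMap k w f = toricMap k w (X i * q) := by
  simp only [map_mul, toricMap_X] at hfg ⊢
  have support_f : ∀ u ∈ (toricMap k w f).support, ∃ d : ι →₀ ℕ, u = Finsupp.weight w d + w i := by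
    intro u hu
    obtain ⟨d, rfl⟩ := mem_range_toricMap_iff.1 ⟨f, rfl⟩ u hu
    have hcoeff : coeff (w j + Finsupp.weight w d) (monomial (w i) 1 * toricMap k w g) ≠ 0 := by
      rwa [← hfg, coeff_monomial_mul, one_mul, ← mem_support_iff]
    rw [coeff_monomial_mul', one_mul, ite_ne_right_iff, ← mem_support_iff] at hcoeff
    obtain ⟨hle, hmem⟩ := hcoeff
    obtain ⟨e, he⟩ := mem_range_toricMap_iff.1 ⟨g, rfl⟩ _ hmem
    exact h d e (by rw [he, tsub_add_cancel_of_le hle, add_comm])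
  have hdvd : monomial (w i) 1 ∣ toricMap k w f := by
    refine monomial_one_dvd_iff_modMonomial_eq_zero.2 (MvPolynomial.ext _ _ fun u => ?_)
    by_cases hle : w i ≤ u
    · rw [coeff_modMonomial_of_le _ hle, coeff_zero]
    · rw [coeff_modMonomial_of_not_le _ hle, coeff_zero, ← notMem_support_iff]
      intro hu
      obtain ⟨d, rfl⟩ := support_f u hu
      exact hle le_add_self
  obtain ⟨p, hp⟩ := hdvd
  obtain ⟨q, rfl⟩ : p ∈ (toricMap k w).range := by
    refine mem_range_toricMap_iff.2 fun u hu => ?_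
    obtain ⟨d, hd⟩ := support_f (w i + u) (by
      rwa [mem_support_iff, hp, coeff_monomial_mul, one_mul, ← mem_support_iff])
    exact ⟨d, by rwa [add_comm, add_left_inj, eq_comm] at hd⟩
  exact ⟨q, hp⟩

theorem span_mk_X_pair_ne_top [CommRing k] [Nontrivial k] {i j : ι} (hi : w i ≠ 0) (hj : w j ≠ 0) :
    Ideal.span {Ideal.Quotient.mk (toricIdeal k w) (X i),
      Ideal.Quotient.mk (toricIdeal k w) (X j)} ≠ ⊤ := by
  have hle : Ideal.span {Ideal.Quotient.mk (toricIdeal k w) (X i),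
      Ideal.Quotient.mk (toricIdeal k w) (X j)} ≤
      RingHom.ker (constantCoeff.comp (toricMap k w).toRingHom.kerLift) := by
    rw [Ideal.span_le, Set.pair_subset_iff]
    classical
    constructor <;> rw [SetLike.mem_coe, RingHom.mem_ker, RingHom.comp_apply, RingHom.kerLift_mk]
    · simp [constantCoeff_eq, coeff_monomial, hi]
    · simp [constantCoeff_eq, coeff_monomial, hj]
  exact ne_top_of_le_ne_top (RingHom.ker_ne_top _) hle

theorem IsSemigroupRegularPair.isRegular [CommRing k] [IsDomain k] {i j : ι}
    (h : IsSemigroupRegularPair w i j) (hi : w i ≠ 0) (hj : w j ≠ 0) :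
    RingTheory.Sequence.IsRegular (MvPolynomial ι k ⧸ toricIdeal k w)
      [Ideal.Quotient.mk (toricIdeal k w) (X i), Ideal.Quotient.mk (toricIdeal k w) (X j)] := by
  have mk_eq_mk {f g : MvPolynomial ι k} :
      Ideal.Quotient.mk (toricIdeal k w) f = Ideal.Quotient.mk (toricIdeal k w) g ↔
        toricMap k w f = toricMap k w g :=
    (RingHom.kerLift_injective (toricMap k w).toRingHom).eq_iff.symm
  refine isRegular_pair ?_ ?_ (span_mk_X_pair_ne_top hi hj)
  · intro f g hfg
    obtain ⟨f, rfl⟩ := Ideal.Quotient.mk_surjective f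
    obtain ⟨g, rfl⟩ := Ideal.Quotient.mk_surjective g
    simp only [smul_eq_mul, ← map_mul, mk_eq_mk] at hfg
    rw [map_mul, map_mul, toricMap_X] at hfg
    exact mk_eq_mk.2 (mul_left_cancel₀ (by simp) hfg)
  · rintro f ⟨g, hfg⟩
    obtain ⟨f, rfl⟩ := Ideal.Quotient.mk_surjective f
    obtain ⟨g, rfl⟩ := Ideal.Quotient.mk_surjective g
    rw [← map_mul, ← map_mul, mk_eq_mk] at hfg
    obtain ⟨q, hq⟩ := h.exists_toricMap_eq hfg
    exact ⟨Ideal.Quotient.mk _ q, by rwa [← map_mul, mk_eq_mk]⟩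

theorem toricMap_isIntegral [CommRing k]
    (hw : ∀ t, ∃ i m, m ≠ 0 ∧ w i = Finsupp.single t m) :
    (toricMap k w).toRingHom.IsIntegral := by
  intro p
  induction p using MvPolynomial.induction_on with
  | C c =>
    convert (toricMap k w).toRingHom.isIntegralElem_map (x := C c)
    simp
  | add p q hp hq => exact hp.add _ hq
  | mul_X p t hp =>
    obtain ⟨i, m, hm, hi⟩ := hw t
    have hX : (toricMap k w).toRingHom.IsIntegralElem (X t ^ m) := by
      convert (toricMap k w).toRingHom.isIntegralElem_map (x := X i)
      simp [hi, X_pow_eq_monomial]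
    let := (toricMap k w).toRingHom.toAlgebra
    exact hp.mul _ (IsIntegral.of_pow (R := MvPolynomial ι k) hm.bot_lt hX)

theorem ringKrullDim_quotient_toricIdeal [Field k] [Finite τ]
    (hw : ∀ t, ∃ i m, m ≠ 0 ∧ w i = Finsupp.single t m) :
    ringKrullDim (MvPolynomial ι k ⧸ toricIdeal k w) = Nat.card τ := by
  rw [ringKrullDim_quotient_ker_of_isIntegral (toricMap_isIntegral hw),
    MvPolynomial.ringKrullDim_of_isNoetherianRing, ringKrullDim_eq_zero_of_field, zero_add]

end Toric

section ProjectiveMonomialCurve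

variable {ι : Type*} {A : ℕ} {b : ι → ℕ}

/-- The exponent vectors `(A - b_i, b_i)` of the projective monomial curve
`x_i ↦ y ^ (A - b_i) * z ^ b_i` of degree `A`, meaningful when every `b_i` is at most `A`. -/
noncomputable def curveExponent (A : ℕ) (b : ι → ℕ) (i : ι) : Fin 2 →₀ ℕ :=
  Finsupp.single 0 (A - b i) + Finsupp.single 1 (b i)

theorem weight_curveExponent_one (d : ι →₀ ℕ) :
    Finsupp.weight (curveExponent A b) d 1 = Finsupp.weight b d := by
  induction d using Finsupp.induction_linear with
  | zero => simp
  | add d e hd he => simp [hd, he]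
  | single i m => simp [Finsupp.weight_single, curveExponent]

theorem weight_curveExponent_zero_add (hb : ∀ i, b i ≤ A) (d : ι →₀ ℕ) :
    Finsupp.weight (curveExponent A b) d 0 + Finsupp.weight b d = A * d.degree := by
  induction d using Finsupp.induction_linear with
  | zero => simp
  | add d e hd he =>
    simp only [map_add, Finsupp.add_apply, mul_add, ← hd, ← he]
    ring
  | single i m =>
    simp [Finsupp.weight_single, curveExponent, ← mul_add, Nat.sub_add_cancel (hb i), mul_comm]

theorem monomial_curveExponent {k : Type*} [CommSemiring k] (i : ι) :
    monomial (curveExponent A b i) (1 : k) = X 0 ^ (A - b i) * X 1 ^ b i := by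
  rw [X_pow_eq_monomial, X_pow_eq_monomial, monomial_mul, mul_one, curveExponent]

theorem curveExponent_of_eq_zero {i : ι} (hi : b i = 0) :
    curveExponent A b i = Finsupp.single 0 A := by
  simp [curveExponent, hi]

theorem curveExponent_of_eq_degree {j : ι} (hj : b j = A) :
    curveExponent A b j = Finsupp.single 1 A := by
  simp [curveExponent, hj]

theorem isSemigroupRegularPair_curveExponent (hb : ∀ i, b i ≤ A) (hA : 0 < A) {i j : ι}
    (hi : b i = 0) (hj : b j = A)
    (h : ∀ d e : ι →₀ ℕ, d i = 0 → d.degree = e.degree →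
      Finsupp.weight b e = Finsupp.weight b d + A →
        ∃ f : ι →₀ ℕ, f.degree + 1 = d.degree ∧ Finsupp.weight b f = Finsupp.weight b d) :
    IsSemigroupRegularPair (curveExponent A b) i j := by
  intro d e hde
  obtain hdi | hdi := ne_or_eq (d i) 0
  · exact ⟨d - Finsupp.single i 1, (Finsupp.weight_sub_single_add hdi).symm⟩
  rw [curveExponent_of_eq_zero hi, curveExponent_of_eq_degree hj] at hde
  rw [curveExponent_of_eq_zero hi]
  have h0 : Finsupp.weight (curveExponent A b) d 0 =
      Finsupp.weight (curveExponent A b) e 0 + A := by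
    simpa using DFunLike.congr_fun hde 0
  have h1 : Finsupp.weight b d + A = Finsupp.weight b e := by
    simpa [weight_curveExponent_one] using DFunLike.congr_fun hde 1
  have hd := weight_curveExponent_zero_add hb d
  have he := weight_curveExponent_zero_add hb e
  have hdeg : d.degree = e.degree := Nat.eq_of_mul_eq_mul_left hA (by lia)
  obtain ⟨f, hfdeg, hf⟩ := h d e hdi hdeg h1.symm
  have hf0 := weight_curveExponent_zero_add hb f
  refine ⟨f, Finsupp.ext (Fin.forall_fin_two.2 ⟨?_, ?_⟩)⟩
  · rw [← hfdeg] at hd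
    rw [Finsupp.add_apply, Finsupp.single_eq_same]
    lia
  · simp [weight_curveExponent_one, hf]

theorem projectiveMonomialCurve_arithmetically_CM {k : Type*} [Field k] (hb : ∀ i, b i ≤ A)
    (hA : 0 < A) {i j : ι} (hi : b i = 0) (hj : b j = A)
    (h : ∀ d e : ι →₀ ℕ, d i = 0 → d.degree = e.degree →
      Finsupp.weight b e = Finsupp.weight b d + A →
        ∃ f : ι →₀ ℕ, f.degree + 1 = d.degree ∧ Finsupp.weight b f = Finsupp.weight b d) :
    letI I := toricIdeal k (curveExponent A b)
    letI Q := MvPolynomial ι k ⧸ I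
    ringKrullDim Q = 2 ∧
      ∃ xs : List Q, xs.length = 2 ∧
        (∀ x ∈ xs, x ∈ Ideal.map (Ideal.Quotient.mk I)
          (Ideal.span (Set.range (X : ι → MvPolynomial ι k)))) ∧
        RingTheory.Sequence.IsRegular Q xs := by
  have hwi := curveExponent_of_eq_zero (A := A) hi
  have hwj := curveExponent_of_eq_degree hj
  refine ⟨?_, [Ideal.Quotient.mk _ (X i), Ideal.Quotient.mk _ (X j)], rfl, ?_, ?_⟩
  · have pure_powers : ∀ t, ∃ l m, m ≠ 0 ∧ curveExponent A b l = Finsupp.single t m :=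
      Fin.forall_fin_two.2 ⟨⟨i, A, hA.ne', hwi⟩, ⟨j, A, hA.ne', hwj⟩⟩
    simpa using ringKrullDim_quotient_toricIdeal (k := k) pure_powers
  · have mk_X_mem (l : ι) := Ideal.mem_map_of_mem
      (Ideal.Quotient.mk (toricIdeal k (curveExponent A b)))
      (Ideal.subset_span (Set.mem_range_self (f := (X : ι → MvPolynomial ι k)) l))
    simp only [List.forall_mem_cons, mk_X_mem, List.not_mem_nil, false_imp_iff, implies_true,
      and_self]
  · exact (isSemigroupRegularPair_curveExponent hb hA hi hj h).isRegular
      (by simp [hwi, hA.ne']) (by simp [hwj, hA.ne'])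

end ProjectiveMonomialCurve

section Backelin

/-- The exponents of the projective closure of the Backelin curve, with `s` as a free parameter; the
coordinate at infinity has exponent `0`. -/
def backelinExponent (n s : ℕ) : Fin 5 → ℕ :=
  ![0, s, s + 3, s + 3 * n + 1, s + 3 * n + 2]

theorem backelinExponent_le {n : ℕ} (hn : 0 < n) (s : ℕ) (i : Fin 5) :
    backelinExponent n s i ≤ s + 3 * n + 2 := by
  fin_cases i <;> simp only [backelinExponent, Fin.reduceFinMk, Matrix.cons_val] <;> lia

theorem weight_backelinExponent (n s : ℕ) (d : Fin 5 →₀ ℕ) :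
    Finsupp.weight (backelinExponent n s) d =
      s * (d 1 + d 2 + d 3 + d 4) + (3 * d 2 + (3 * n + 1) * d 3 + (3 * n + 2) * d 4) := by
  simp only [backelinExponent, Finsupp.weight_eq_sum, Fin.sum_univ_five, Matrix.cons_val,
    smul_eq_mul]
  ring

theorem exists_sum_eq_with_largest_term {n b c e : ℕ} (hn : 0 < n)
    (hw : (3 * n + 1) * (3 * n + 2) < 3 * b + (3 * n + 1) * c + (3 * n + 2) * e) :
    ∃ b' c' e', b' + c' + e' + 1 ≤ b + c + e ∧
      3 * b' + (3 * n + 1) * c' + (3 * n + 2) * (e' + 1) =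
        3 * b + (3 * n + 1) * c + (3 * n + 2) * e := by
  obtain _ | e := e
  swap
  · exact ⟨b, c, e, le_rfl, rfl⟩
  -- The rewriting rules are `(3n + 2) * 3 = 3 * (3n + 2)`,
  -- `(3n + 2) * (3n + 1) = (3n + 1) * (3n + 2)` and `1 * 3 + 3 * (3n + 1) = 3 * (3n + 2)`.
  by_cases hb : 3 * n + 2 ≤ b
  · obtain ⟨b, rfl⟩ := Nat.exists_eq_add_of_le hb
    exact ⟨b, c, 2, by lia, by ring⟩
  by_cases hc : 3 * n + 2 ≤ c
  · obtain ⟨c, rfl⟩ := Nat.exists_eq_add_of_le hc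
    exact ⟨b, c, 3 * n, by lia, by ring⟩
  by_cases hbc : 1 ≤ b ∧ 3 ≤ c
  · obtain ⟨b, rfl⟩ := Nat.exists_eq_add_of_le hbc.1
    obtain ⟨c, rfl⟩ := Nat.exists_eq_add_of_le hbc.2
    exact ⟨b, c, 2, by lia, by ring⟩
  have irreducible_le : 3 * b + (3 * n + 1) * c ≤ (3 * n + 1) * (3 * n + 2) := by
    obtain rfl | hc2 : b = 0 ∨ c ≤ 2 := by lia
    · nlinarith
    · nlinarith
  lia

theorem exists_degree_succ_eq_weight_backelinExponent_eq {n s : ℕ} (hn : 0 < n)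
    (hs : (3 * n + 1) ^ 2 ≤ s) {d e : Fin 5 →₀ ℕ} (hd0 : d 0 = 0) (hdeg : d.degree = e.degree)
    (hw : Finsupp.weight (backelinExponent n s) e =
      Finsupp.weight (backelinExponent n s) d + (s + 3 * n + 2)) :
    ∃ f : Fin 5 →₀ ℕ, f.degree + 1 = d.degree ∧
      Finsupp.weight (backelinExponent n s) f = Finsupp.weight (backelinExponent n s) d := by
  simp only [weight_backelinExponent, Finsupp.degree_eq_sum, Fin.sum_univ_five] at hw hdeg ⊢
  have large : (3 * n + 1) * (3 * n + 2) < 3 * e 2 + (3 * n + 1) * e 3 + (3 * n + 2) * e 4 := by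
    have : s * (e 1 + e 2 + e 3 + e 4) ≤ s * (d 1 + d 2 + d 3 + d 4) :=
      Nat.mul_le_mul_left s (by lia)
    nlinarith
  obtain ⟨b, c, m, hle, heq⟩ := exists_sum_eq_with_largest_term hn large
  obtain ⟨q, hq⟩ := Nat.exists_eq_add_of_le hle
  -- `e` is rewritten, padded by `x₁` to keep its degree, and then divided by `x₄`.
  refine ⟨Finsupp.equivFunOnFinite.symm ![e 0, e 1 + q, b, c, m], ?_, ?_⟩
  · simp only [Finsupp.equivFunOnFinite_symm_apply_apply, Matrix.cons_val]
    lia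
  · simp only [Finsupp.equivFunOnFinite_symm_apply_apply, Matrix.cons_val]
    linear_combination hw + s * hq.symm + heq

theorem backelin_projective_closure_arithmetically_CM_general
    (k : Type*) [Field k] (n s : ℕ) (hn : 0 < n) (hs : (3 * n + 1) ^ 2 ≤ s) :
    letI a : Fin 4 → ℕ := ![s, s + 3, s + 3 * n + 1, s + 3 * n + 2]
    letI u : MvPolynomial (Fin 2) k := X 0
    letI v : MvPolynomial (Fin 2) k := X 1
    letI IH : Ideal (MvPolynomial (Fin 5) k) :=
      RingHom.ker (aeval (R := k)
        ![u ^ a 3, u ^ (a 3 - a 0) * v ^ a 0, u ^ (a 3 - a 1) * v ^ a 1,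
          u ^ (a 3 - a 2) * v ^ a 2, v ^ a 3]).toRingHom
    letI Q := MvPolynomial (Fin 5) k ⧸ IH
    ringKrullDim Q = 2 ∧
      ∃ xs : List Q, xs.length = 2 ∧
        (∀ x ∈ xs, x ∈ Ideal.map (Ideal.Quotient.mk IH)
          (Ideal.span (Set.range (X : Fin 5 → MvPolynomial (Fin 5) k)))) ∧
        RingTheory.Sequence.IsRegular Q xs := by
  have parametrization :
      (fun i => monomial (curveExponent (s + 3 * n + 2) (backelinExponent n s) i) (1 : k)) =
        ![X 0 ^ (s + 3 * n + 2), X 0 ^ (s + 3 * n + 2 - s) * X 1 ^ s,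
          X 0 ^ (s + 3 * n + 2 - (s + 3)) * X 1 ^ (s + 3),
          X 0 ^ (s + 3 * n + 2 - (s + 3 * n + 1)) * X 1 ^ (s + 3 * n + 1),
          X 1 ^ (s + 3 * n + 2)] := by
    funext i
    rw [monomial_curveExponent]
    fin_cases i <;> simp [backelinExponent]
  have h := projectiveMonomialCurve_arithmetically_CM (k := k) (i := 0) (j := 4)
    (backelinExponent_le hn s) (by lia) rfl rfl
    fun _ _ => exists_degree_succ_eq_weight_backelinExponent_eq hn hs
  rw [toricIdeal, toricMap, parametrization] at h
  exact h

end Backelin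

/-- The projective closure of the Backelin curve is arithmetically
Cohen–Macaulay: the homogeneous coordinate ring `Q = k[x₀,…,x₄]/I^H` (where
`I^H`, the homogenization of the toric ideal, is realized as the kernel of
`x₀ ↦ s^{a₄}`, `x_i ↦ s^{a₄-a_i} t^{a_i}`) has Krull dimension `2` and admits a
regular sequence of length `2` inside the irrelevant maximal ideal, i.e. `Q` is
a Cohen–Macaulay graded ring. -/
theorem backelin_projective_closure_arithmetically_CM
    (k : Type*) [Field k] (n r : ℕ) (hn : 2 ≤ n) (hr : 3 * n + 2 ≤ r) :
    letI a : Fin 4 → ℕ :=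
      ![r * (3 * n + 2) + 3, r * (3 * n + 2) + 3 + 3,
        r * (3 * n + 2) + 3 + 3 * n + 1, r * (3 * n + 2) + 3 + 3 * n + 2]
    letI s : MvPolynomial (Fin 2) k := X 0
    letI t : MvPolynomial (Fin 2) k := X 1
    letI IH : Ideal (MvPolynomial (Fin 5) k) :=
      RingHom.ker (aeval (R := k)
        ![s ^ a 3, s ^ (a 3 - a 0) * t ^ a 0, s ^ (a 3 - a 1) * t ^ a 1,
          s ^ (a 3 - a 2) * t ^ a 2, t ^ a 3]).toRingHom
    letI Q := MvPolynomial (Fin 5) k ⧸ IH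
    ringKrullDim Q = 2 ∧
      ∃ xs : List Q, xs.length = 2 ∧
        (∀ x ∈ xs, x ∈ Ideal.map (Ideal.Quotient.mk IH)
          (Ideal.span (Set.range (X : Fin 5 → MvPolynomial (Fin 5) k)))) ∧
        RingTheory.Sequence.IsRegular Q xs := by
  have hs : (3 * n + 1) ^ 2 ≤ r * (3 * n + 2) + 3 := by nlinarith
  exact backelin_projective_closure_arithmetically_CM_general k n _ (by lia) hs
end

section
/- Buchsbaum–Eisenbud acyclicity criterion: a complex 0 → F_n → F_{n−1} → ... → F_1 → F_0 of finite free modules over a Noetherian ring is exact if and only if for each i, rank(φ_i) + rank(φ_{i+1}) = rank(F_i) and grade(I_{rank(φ_i)}(φ_i)) ≥ i, where I_r(φ) is the ideal of r×r minors of a matrix representing φ_i. -/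
open Matrix

variable {R : Type*} [CommRing R]

/-- The ideal of `r × r` minors of a matrix. -/
def minorsIdeal {p q : ℕ} (r : ℕ) (M : Matrix (Fin p) (Fin q) R) : Ideal R :=
  Ideal.span {d | ∃ (ri : Fin r → Fin p) (ci : Fin r → Fin q),
    d = (M.submatrix ri ci).det}

/-- The (determinantal) rank of a matrix over a commutative ring: the largest
`r` such that the ideal of `r × r` minors is nonzero. -/
noncomputable def matRank {p q : ℕ} (M : Matrix (Fin p) (Fin q) R) : ℕ :=
  sSup {r | minorsIdeal r M ≠ ⊥}

/-- `grade I ≥ i`: the ideal `I` contains a regular sequence of length `i`. -/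
def GradeGE (I : Ideal R) (i : ℕ) : Prop :=
  ∃ xs : List R, xs.length = i ∧ (∀ x ∈ xs, x ∈ I) ∧
    RingTheory.Sequence.IsWeaklyRegular R xs

/-!
Over `R_P` a pair `A * B = 0` whose minors of complementary sizes `ρ + β = q` include units splits,
so exactness and the rank condition are controlled prime by prime.

If the rank and grade conditions hold, let `k` be maximal with nonzero homology at `F_{k+1}`, and
let the class of `z` in it have prime annihilator `P`. Suppose the minors of `M i` at `i ≥ k`
generate an ideal inside `P`, with `i` maximal. Then `M (i + 1)` splits off after inverting some
`D ∉ P`, and `i + 1` regular elements annihilating the class of `z` can be moved one at a time up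
the exact complex until `D` annihilates it, which is absurd. So no ideal of minors lies in `P` and
the complex splits at `P`, contradicting the choice of `z`.

If the complex is exact and `P` is the annihilator of `s`, multiplication by `s` embeds `R ⧸ P` in
`R`, so exactness descends to the residue field of `P`, where ranks add up. The ranks are thus the
same at all associated primes, the ideals of minors lie in none of them, and each contains a
regular element `x`. Modulo `x` the complex stays exact except at its last spot, and induction on
the length of the regular sequence finishes.
-/

section Matrices

variable {p q l : ℕ} {A : Matrix (Fin p) (Fin q) R} {B : Matrix (Fin q) (Fin l) R}

lemma mul_eq_zero_of_exact (hAB : Function.Exact B.mulVecLin A.mulVecLin) : A * B = 0 := by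
  rw [← Matrix.toLin'_apply', ← Matrix.toLin'_apply'] at hAB
  apply Matrix.toLin'.injective
  rw [Matrix.toLin'_mul, hAB.linearMap_comp_eq_zero, map_zero]

lemma map_mulVec_comp {S : Type*} [CommRing S] (f : R →+* S) (A : Matrix (Fin p) (Fin q) R)
    (w : Fin q → R) : A.map f *ᵥ (f ∘ w) = f ∘ (A *ᵥ w) :=
  (funext (RingHom.map_mulVec f A w)).symm

lemma det_mul_eq_zero_of_lt {m n : Type*} [Fintype m] [DecidableEq m] [Fintype n]
    (h : Fintype.card n < Fintype.card m) (X : Matrix m n R) (Y : Matrix n m R) :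
    (X * Y).det = 0 := by
  obtain ⟨k, hk⟩ := Nat.exists_eq_add_of_lt h
  have e : m ≃ n ⊕ Fin (k + 1) := Fintype.equivOfCardEq (by simp [hk, add_assoc])
  have padded : X * Y = (Matrix.fromCols X (0 : Matrix m (Fin (k + 1)) R)).submatrix id e *
      (Matrix.fromRows Y (0 : Matrix (Fin (k + 1)) m R)).submatrix e id := by
    rw [Matrix.submatrix_mul_equiv, Matrix.fromCols_mul_fromRows]
    simp
  rw [padded, Matrix.det_mul, Matrix.det_eq_zero_of_column_eq_zero (e.symm (Sum.inr 0)), zero_mul]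
  simp

lemma mul_adjugate_mul_mul {m n : Type*} [Fintype m] [DecidableEq m] [Fintype n] [DecidableEq n]
    (e : m ≃ n) (X : Matrix m n R) (Y : Matrix n m R) :
    Y * (X * Y).adjugate * X = (X * Y).det • (1 : Matrix n n R) := by
  obtain ⟨X, rfl⟩ : ∃ X' : Matrix m m R, X = X'.submatrix id e.symm :=
    ⟨X.submatrix id e, by simp⟩
  obtain ⟨Y, rfl⟩ : ∃ Y' : Matrix m m R, Y = Y'.submatrix e.symm id :=
    ⟨Y.submatrix e id, by simp⟩
  have square : Y * (X * Y).adjugate * X = (X * Y).det • 1 := by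
    rw [Matrix.adjugate_mul_distrib, ← Matrix.mul_assoc, Matrix.mul_adjugate, Matrix.smul_mul,
      Matrix.one_mul, Matrix.smul_mul, Matrix.adjugate_mul, smul_smul, mul_comm, Matrix.det_mul]
  have hXY : X.submatrix id e.symm * Y.submatrix e.symm id = X * Y :=
    Matrix.submatrix_mul_equiv X Y id e.symm id
  rw [hXY]
  ext i j
  simpa [Matrix.mul_apply, Matrix.one_apply] using congrFun₂ square (e.symm i) (e.symm j)

end Matrices

section Minors

lemma minorsIdeal_le_iff {p q r : ℕ} {A : Matrix (Fin p) (Fin q) R} {I : Ideal R} :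
    minorsIdeal r A ≤ I ↔
      ∀ (ri : Fin r → Fin p) (ci : Fin r → Fin q), (A.submatrix ri ci).det ∈ I := by
  rw [minorsIdeal, Ideal.span_le]
  exact ⟨fun h ri ci => h ⟨ri, ci, rfl⟩, by rintro h _ ⟨ri, ci, rfl⟩; exact h ri ci⟩

lemma minorsIdeal_zero_left {p q : ℕ} (A : Matrix (Fin p) (Fin q) R) : minorsIdeal 0 A = ⊤ := by
  rw [Ideal.eq_top_iff_one, ← Matrix.det_fin_zero (A := A.submatrix Fin.elim0 Fin.elim0)]
  exact minorsIdeal_le_iff.1 le_rfl _ _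

lemma minorsIdeal_zero_right {p q r : ℕ} (hr : 0 < r) :
    minorsIdeal r (0 : Matrix (Fin p) (Fin q) R) = ⊥ := by
  have : Nonempty (Fin r) := ⟨⟨0, hr⟩⟩
  exact le_bot_iff.1 (minorsIdeal_le_iff.2 fun _ _ => Matrix.det_zero)

lemma map_minorsIdeal {S : Type*} [CommRing S] (f : R →+* S) {p q : ℕ} (r : ℕ)
    (A : Matrix (Fin p) (Fin q) R) :
    (minorsIdeal r A).map f = minorsIdeal r (A.map f) := by
  refine le_antisymm (Ideal.map_le_iff_le_comap.2 (minorsIdeal_le_iff.2 fun ri ci => ?_))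
    (minorsIdeal_le_iff.2 fun ri ci => ?_)
  · rw [Ideal.mem_comap, RingHom.map_det]
    exact minorsIdeal_le_iff.1 le_rfl ri ci
  · have := Ideal.mem_map_of_mem f (minorsIdeal_le_iff.1 (le_refl (minorsIdeal r A)) ri ci)
    rwa [RingHom.map_det] at this

lemma exists_mul_mul_eq_smul_one {p q ρ : ℕ} {A : Matrix (Fin p) (Fin q) R} {I : Ideal R}
    (h : ¬ minorsIdeal ρ A ≤ I) :
    ∃ d ∉ I, ∃ (S : Matrix (Fin ρ) (Fin p) R) (T : Matrix (Fin q) (Fin ρ) R),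
      S * A * T = d • (1 : Matrix (Fin ρ) (Fin ρ) R) := by
  simp only [minorsIdeal_le_iff, not_forall] at h
  obtain ⟨ri, ci, hd⟩ := h
  have selection : (1 : Matrix (Fin p) (Fin p) R).submatrix ri id * A *
      (1 : Matrix (Fin q) (Fin q) R).submatrix id ci = A.submatrix ri ci := by
    simpa using (congrArg (· * (1 : Matrix (Fin q) (Fin q) R).submatrix id ci)
      (Matrix.submatrix_mul_equiv 1 A ri (Equiv.refl _) id)).trans
      (Matrix.submatrix_mul_equiv (1 * A) 1 ri (Equiv.refl _) ci)
  refine ⟨_, hd, (A.submatrix ri ci).adjugate * (1 : Matrix (Fin p) (Fin p) R).submatrix ri id,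
    (1 : Matrix (Fin q) (Fin q) R).submatrix id ci, ?_⟩
  rw [← Matrix.adjugate_mul, Matrix.mul_assoc, Matrix.mul_assoc, ← Matrix.mul_assoc _ A, selection]

lemma matRank_zero [Nontrivial R] {p q : ℕ} : matRank (0 : Matrix (Fin p) (Fin q) R) = 0 := by
  refine IsGreatest.csSup_eq ⟨?_, fun r hr => ?_⟩
  · simp [minorsIdeal_zero_left]
  · exact Nat.le_zero.2 (Nat.eq_zero_of_not_pos fun hpos => hr (minorsIdeal_zero_right hpos))

end Minors

section Splitting

variable {p q l ρ β : ℕ} {A : Matrix (Fin p) (Fin q) R} {B : Matrix (Fin q) (Fin l) R}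

lemma exists_smul_one_eq_mul_add_mul (hAB : A * B = 0) (hq : ρ + β = q) {P : Ideal R} [P.IsPrime]
    (hA : ¬ minorsIdeal ρ A ≤ P) (hB : ¬ minorsIdeal β B ≤ P) :
    ∃ D ∉ P, ∃ (U : Matrix (Fin q) (Fin ρ) R) (V : Matrix (Fin ρ) (Fin p) R)
      (T : Matrix (Fin l) (Fin q) R), D • (1 : Matrix (Fin q) (Fin q) R) = U * V * A + B * T := by
  obtain ⟨d, hd, S₁, T₁, hS⟩ := exists_mul_mul_eq_smul_one hA
  obtain ⟨e, he, S₂, T₂, hT⟩ := exists_mul_mul_eq_smul_one hB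
  let X := Matrix.fromRows (S₁ * A) S₂
  let Y := Matrix.fromCols T₁ (B * T₂)
  have hdet : (X * Y).det = d ^ ρ * e ^ β := by
    have hAT : S₁ * A * (B * T₂) = 0 := by
      rw [Matrix.mul_assoc, ← Matrix.mul_assoc A, hAB, Matrix.zero_mul, Matrix.mul_zero]
    rw [Matrix.fromRows_mul_fromCols, hS, hAT, ← Matrix.mul_assoc S₂, hT,
      Matrix.det_fromBlocks_zero₁₂]
    simp
  obtain ⟨W, hW⟩ : ∃ W, W * X = (d ^ ρ * e ^ β) • (1 : Matrix (Fin q) (Fin q) R) :=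
    ⟨_, hdet ▸ mul_adjugate_mul_mul (finSumFinEquiv.trans (finCongr hq)) X Y⟩
  rw [← Matrix.fromCols_toCols W, Matrix.fromCols_mul_fromRows] at hW
  have hS₂ : S₂ * (e • 1 - B * T₂ * S₂) = 0 := by
    rw [Matrix.mul_sub, ← Matrix.mul_assoc, ← Matrix.mul_assoc, hT]
    simp
  have hA' : A * (e • 1 - B * T₂ * S₂) = e • A := by
    rw [Matrix.mul_sub, ← Matrix.mul_assoc, ← Matrix.mul_assoc, hAB]
    simp
  have hsplit : W.toCols₁ * S₁ * (e • A) = (d ^ ρ * e ^ β) • (e • 1 - B * T₂ * S₂) := by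
    rw [← hA', ← Matrix.one_mul (e • 1 - B * T₂ * S₂), ← Matrix.smul_mul, ← hW, Matrix.add_mul,
      Matrix.mul_assoc W.toCols₂, Matrix.one_mul, hS₂, Matrix.mul_zero, add_zero]
    simp only [Matrix.mul_assoc]
  refine ⟨d ^ ρ * e ^ β * e, ?_, e • W.toCols₁, S₁, (d ^ ρ * e ^ β) • (T₂ * S₂), ?_⟩
  · exact P.primeCompl.mul_mem (P.primeCompl.mul_mem (pow_mem (S := P.primeCompl) hd _)
      (pow_mem (S := P.primeCompl) he _)) he
  · rw [Matrix.smul_mul, Matrix.smul_mul, ← Matrix.mul_smul, hsplit, smul_sub, smul_smul,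
      Matrix.mul_smul, ← Matrix.mul_assoc, sub_add_cancel]

lemma exists_smul_mem_range_of_mulVec_eq_zero (hAB : A * B = 0) (hq : ρ + β = q)
    {P : Ideal R} [P.IsPrime] (hA : ¬ minorsIdeal ρ A ≤ P) (hB : ¬ minorsIdeal β B ≤ P)
    {v : Fin q → R} (hv : A *ᵥ v = 0) :
    ∃ D ∉ P, D • v ∈ LinearMap.range B.mulVecLin := by
  obtain ⟨D, hD, U, V, T, h⟩ := exists_smul_one_eq_mul_add_mul hAB hq hA hB
  refine ⟨D, hD, T *ᵥ v, ?_⟩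
  have := congrArg (· *ᵥ v) h
  simpa [Matrix.add_mulVec, ← Matrix.mulVec_mulVec, hv, Matrix.smul_mulVec] using this.symm

lemma exists_mul_mul_eq_smul (hAB : A * B = 0) (hq : ρ + β = q) {P : Ideal R} [P.IsPrime]
    (hA : ¬ minorsIdeal ρ A ≤ P) (hB : ¬ minorsIdeal β B ≤ P) :
    ∃ D ∉ P, ∃ (U : Matrix (Fin q) (Fin ρ) R) (V : Matrix (Fin ρ) (Fin p) R),
      A * U * (V * A) = D • A := by
  obtain ⟨D, hD, U, V, T, h⟩ := exists_smul_one_eq_mul_add_mul hAB hq hA hB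
  refine ⟨D, hD, U, V, ?_⟩
  have := congrArg (A * ·) h
  simpa [Matrix.mul_add, ← Matrix.mul_assoc, hAB] using this.symm

end Splitting

section Depth

open RingTheory.Sequence

lemma isWeaklyRegular_pi {xs : List R} (h : IsWeaklyRegular R xs) (ι : Type*) [Finite ι] :
    IsWeaklyRegular (ι → R) xs :=
  (LinearEquiv.isWeaklyRegular_congr (TensorProduct.rid R (ι → R)) xs).1
    h.isWeaklyRegular_lTensor

lemma smul_mk_mem_range_map_iff {N₀ N₁ N₂ : Type*} [AddCommGroup N₀] [AddCommGroup N₁]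
    [AddCommGroup N₂] [Module R N₀] [Module R N₁] [Module R N₂] {f : N₂ →ₗ[R] N₁}
    {g : N₁ →ₗ[R] N₀} (hfg : Function.Exact f g) {x : R} (hx : IsSMulRegular N₀ x) {u : N₁}
    {z : N₀} (hu : g u = x • z) (c : R) :
    c • (Submodule.Quotient.mk u : QuotSMulTop x N₁) ∈ LinearMap.range (QuotSMulTop.map x f) ↔
      c • z ∈ LinearMap.range g := by
  have mk_eq (a b : N₁) : (Submodule.Quotient.mk a : QuotSMulTop x N₁) = Submodule.Quotient.mk b ↔
      ∃ c, x • c = a - b := by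
    simp [Submodule.Quotient.eq, Submodule.mem_smul_pointwise_iff_exists]
  constructor
  · rintro ⟨w, hw⟩
    obtain ⟨w, rfl⟩ := Submodule.Quotient.mk_surjective _ w
    rw [QuotSMulTop.map_apply_mk, ← Submodule.Quotient.mk_smul, eq_comm, mk_eq] at hw
    obtain ⟨u', hu'⟩ := hw
    refine ⟨u', hx ?_⟩
    change x • g u' = x • c • z
    rw [← map_smul, hu', map_sub, hfg.apply_apply_eq_zero, sub_zero, map_smul, hu, smul_comm]
  · rintro ⟨u', hu'⟩
    obtain ⟨w, hw⟩ := (hfg (c • u - x • u')).1 (by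
      rw [map_sub, map_smul, map_smul, hu, hu', smul_comm, sub_self])
    refine ⟨Submodule.Quotient.mk w, ?_⟩
    rw [QuotSMulTop.map_apply_mk, ← Submodule.Quotient.mk_smul, eq_comm, mk_eq, hw]
    exact ⟨u', (sub_sub_cancel _ _).symm⟩

lemma smul_mem_range_of_isWeaklyRegular {N : ℕ → Type*} [∀ j, AddCommGroup (N j)]
    [∀ j, Module R (N j)] (φ : ∀ j, N (j + 1) →ₗ[R] N j) {ℓ : ℕ}
    (hφ : ∀ j < ℓ, Function.Exact (φ (j + 1)) (φ j))
    {D : R} {t : N ℓ →ₗ[R] N (ℓ + 1)} (ht : φ ℓ ∘ₗ t ∘ₗ φ ℓ = D • φ ℓ)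
    {xs : List R} (hxs : ∀ j, IsWeaklyRegular (N j) xs) (hℓ : ℓ < xs.length)
    {z : N 0} (hz : ∀ x ∈ xs, x • z ∈ LinearMap.range (φ 0)) :
    D • z ∈ LinearMap.range (φ 0) := by
  induction ℓ generalizing N xs with
  | zero =>
    obtain ⟨x, xs, rfl⟩ := List.exists_cons_of_length_pos hℓ
    obtain ⟨u, hu⟩ := hz x List.mem_cons_self
    refine ⟨t z, ((isWeaklyRegular_cons_iff _ _ _).1 (hxs 0)).1 ?_⟩
    change x • φ 0 (t z) = x • D • z
    rw [← map_smul, ← map_smul, smul_comm, ← hu]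
    exact LinearMap.congr_fun ht u
  | succ ℓ ih =>
    obtain ⟨x, xs, rfl⟩ := List.exists_cons_of_length_pos (Nat.zero_lt_of_lt hℓ)
    simp only [isWeaklyRegular_cons_iff] at hxs
    obtain ⟨u, hu⟩ := hz x List.mem_cons_self
    have lift_iff := smul_mk_mem_range_map_iff (hφ 0 ℓ.succ_pos) (hxs 0).1 hu
    refine (lift_iff D).1 (ih (fun j => QuotSMulTop.map x (φ (j + 1))) (fun j hj => ?_)
      (t := QuotSMulTop.map x t) ?_ (fun j => (hxs (j + 1)).2) (Nat.lt_of_succ_lt_succ hℓ)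
      fun y hy => (lift_iff y).2 (hz y (List.mem_cons_of_mem _ hy)))
    · exact QuotSMulTop.map_first_exact_on_four_term_exact_of_isSMulRegular_last
        (hφ (j + 1) (Nat.succ_lt_succ hj)) (hφ j (Nat.lt_succ_of_lt hj)) (hxs j).1
    · rw [← QuotSMulTop.map_comp, ← QuotSMulTop.map_comp, ht, map_smul]

end Depth

section Backward

lemma exists_isPrime_forall_mem_iff_smul_mem [IsNoetherianRing R] {V : Type*} [AddCommGroup V]
    [Module R V] {K N : Submodule R V} (h : ¬ K ≤ N) :
    ∃ y ∈ K, ∃ P : Ideal R, P.IsPrime ∧ ∀ c, c ∈ P ↔ c • y ∈ N := by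
  have : Nontrivial (K.map N.mkQ) := by
    rwa [Submodule.nontrivial_iff_ne_bot, Ne, ← le_bot_iff, Submodule.map_le_iff_le_comap,
      Submodule.comap_bot, Submodule.ker_mkQ]
  obtain ⟨P, hP⟩ := associatedPrimes.nonempty R (K.map N.mkQ)
  obtain ⟨hP, ⟨_, y, hy, rfl⟩, hPy⟩ := isAssociatedPrime_iff.1 hP
  refine ⟨y, hy, P, hP, fun c => ?_⟩
  rw [hPy, Submodule.mem_colon_singleton, Submodule.mem_bot, Subtype.ext_iff]
  exact Submodule.Quotient.mk_eq_zero N (x := c • y)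

variable {b : ℕ → ℕ} {M : ∀ i, Matrix (Fin (b i)) (Fin (b (i + 1))) R} {n : ℕ} {r : ℕ → ℕ}

lemma exists_mul_mul_eq_smul_of_forall_ge {i : ℕ} (hM : n ≤ i → M i = 0)
    (hMM : i < n → M i * M (i + 1) = 0) (hr : i < n → r i + r (i + 1) = b (i + 1))
    {P : Ideal R} [P.IsPrime] (h : ∀ j ≥ i, ¬ minorsIdeal (r j) (M j) ≤ P) :
    ∃ D ∉ P, ∃ (U : Matrix (Fin (b (i + 1))) (Fin (r i)) R)
      (V : Matrix (Fin (r i)) (Fin (b i)) R), M i * U * (V * M i) = D • M i := by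
  rcases lt_or_ge i n with hi | hi
  · exact exists_mul_mul_eq_smul (hMM hi) (hr hi) (h i le_rfl) (h (i + 1) i.le_succ)
  · exact ⟨1, P.one_notMem, 0, 0, by simp [hM hi]⟩

lemma minorsIdeal_not_le_of_forall_mem_iff_smul_mem (hM : ∀ j ≥ n, M j = 0)
    (hMM : ∀ j, M j * M (j + 1) = 0) (hr₀ : ∀ j ≥ n, r j = 0)
    (hr : ∀ j < n, r j + r (j + 1) = b (j + 1))
    (hgrade : ∀ j < n, GradeGE (minorsIdeal (r j) (M j)) (j + 1)) {k : ℕ}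
    (hexact : ∀ j > k, j < n → Function.Exact (M (j + 1)).mulVecLin (M j).mulVecLin)
    {P : Ideal R} [P.IsPrime] {z : Fin (b (k + 1)) → R}
    (hz : ∀ c, c ∈ P ↔ c • z ∈ LinearMap.range (M (k + 1)).mulVecLin) :
    ∀ i ≥ k, ¬ minorsIdeal (r i) (M i) ≤ P := by
  have htop (i) (hi : n ≤ i) : ¬ minorsIdeal (r i) (M i) ≤ P := by
    rw [hr₀ i hi, minorsIdeal_zero_left, top_le_iff]
    exact Ideal.IsPrime.ne_top ‹_›
  refine Nat.strong_decreasing_induction ⟨n, fun i hi _ => htop i hi.le⟩ fun i ih hki hle => ?_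
  have hi : i < n := lt_of_not_ge fun hi => htop i hi hle
  obtain ⟨ℓ, rfl⟩ := Nat.exists_eq_add_of_le hki
  obtain ⟨D, hD, U, V, hUV⟩ := exists_mul_mul_eq_smul_of_forall_ge (hM (k + 1 + ℓ))
    (fun _ => hMM _) (hr _) (P := P) fun j hj => ih j (by omega) (by omega)
  obtain ⟨xs, hlen, hxs, hreg⟩ := hgrade _ hi
  refine hD ((hz D).2 (smul_mem_range_of_isWeaklyRegular (N := fun j => Fin (b (k + 1 + j)) → R)
    (fun j => (M (k + 1 + j)).mulVecLin) (fun j hj => hexact (k + 1 + j) (by omega) (by omega))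
    (t := (U * V).mulVecLin) ?_ (fun j => isWeaklyRegular_pi hreg _) (by omega)
    fun x hx => (hz x).1 (hle (hxs x hx))))
  rw [← Matrix.mulVecLin_mul, ← Matrix.mulVecLin_mul, Matrix.mul_assoc U, ← Matrix.mul_assoc, hUV]
  exact LinearMap.ext fun v => Matrix.smul_mulVec D _ v

theorem exact_of_gradeGE_minorsIdeal [IsNoetherianRing R] (hM : ∀ j ≥ n, M j = 0)
    (hMM : ∀ j, M j * M (j + 1) = 0) (hr₀ : ∀ j ≥ n, r j = 0)
    (hr : ∀ j < n, r j + r (j + 1) = b (j + 1))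
    (hgrade : ∀ j < n, GradeGE (minorsIdeal (r j) (M j)) (j + 1)) :
    ∀ k < n, Function.Exact (M (k + 1)).mulVecLin (M k).mulVecLin := by
  refine Nat.strong_decreasing_induction ⟨n, fun k hk hk' => by omega⟩ fun k ih hk => ?_
  rw [LinearMap.exact_iff]
  refine le_antisymm ?_ (LinearMap.range_le_ker_iff.2 ?_)
  · by_contra hle
    obtain ⟨z, hz, P, hP, hPz⟩ := exists_isPrime_forall_mem_iff_smul_mem hle
    have hminors := minorsIdeal_not_le_of_forall_mem_iff_smul_mem hM hMM hr₀ hr hgrade ih hPz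
    obtain ⟨D, hD, hDz⟩ := exists_smul_mem_range_of_mulVec_eq_zero (hMM k) (hr k hk)
      (hminors k le_rfl) (hminors (k + 1) k.le_succ) hz
    exact hD ((hPz D).2 hDz)
  · rw [← Matrix.mulVecLin_mul, hMM, Matrix.mulVecLin_zero]

end Backward

section RankAtPrime

lemma minorsIdeal_rank_ne_bot {K : Type*} [Field K] {p q : ℕ} (A : Matrix (Fin p) (Fin q) K) :
    minorsIdeal A.rank A ≠ ⊥ := by
  have exists_cols {p q : ℕ} (A : Matrix (Fin p) (Fin q) K) :
      ∃ ci : Fin A.rank → Fin q, LinearIndependent K (A.submatrix id ci).col := by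
    rw [A.rank_eq_finrank_span_cols]
    obtain ⟨f, hf, -, hf'⟩ := Submodule.exists_fun_fin_finrank_span_eq K (Set.range A.col)
    choose ci hci using hf
    exact ⟨ci, (funext hci : (A.submatrix id ci).col = f) ▸ hf'⟩
  obtain ⟨ci, hci⟩ := exists_cols A
  have hrank : (A.submatrix id ci)ᵀ.rank = A.rank := by
    simpa using LinearIndependent.rank_matrix (M := (A.submatrix id ci)ᵀ) hci
  obtain ⟨ri, hri⟩ := hrank ▸ exists_cols (A.submatrix id ci)ᵀ
  have hunit : IsUnit (A.submatrix ri ci) := Matrix.linearIndependent_rows_iff_isUnit.1 hri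
  intro h
  exact ((Matrix.isUnit_iff_isUnit_det _).1 hunit).ne_zero (minorsIdeal_le_iff.1 h.le ri ci)

/-- The rank of a matrix over the residue field at a prime `P`. It makes rank-nullity available over
`R` one prime at a time. -/
noncomputable def rankAt {p q : ℕ} (P : Ideal R) [P.IsPrime] (A : Matrix (Fin p) (Fin q) R) : ℕ :=
  (A.map (algebraMap R P.ResidueField)).rank

lemma minorsIdeal_rankAt_not_le {p q : ℕ} (P : Ideal R) [P.IsPrime]
    (A : Matrix (Fin p) (Fin q) R) : ¬ minorsIdeal (rankAt P A) A ≤ P := by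
  intro h
  apply minorsIdeal_rank_ne_bot (A.map (algebraMap R P.ResidueField))
  rw [← map_minorsIdeal, Ideal.map_eq_bot_iff_le_ker, Ideal.ker_algebraMap_residueField]
  exact h

lemma exists_smul_eq_algebraMap_residueField (P : Ideal R) [P.IsPrime] {ι : Type*} [Finite ι]
    (v : ι → P.ResidueField) :
    ∃ c ∉ P, ∃ w : ι → R, c • v = algebraMap R P.ResidueField ∘ w := by
  obtain ⟨⟨c, hc⟩, hw⟩ := IsLocalization.exist_integer_multiples_of_finite
    (nonZeroDivisors (R ⧸ P)) v
  choose w hw using hw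
  obtain ⟨c, rfl⟩ := Ideal.Quotient.mk_surjective c
  choose w' hw' using fun i => Ideal.Quotient.mk_surjective (w i)
  refine ⟨c, fun h => nonZeroDivisors.ne_zero hc (Ideal.Quotient.eq_zero_iff_mem.2 h), w',
    funext fun i => ?_⟩
  rw [Function.comp_apply, ← Ideal.algebraMap_quotient_residueField_mk, hw', hw, Pi.smul_apply,
    Algebra.smul_def, Algebra.smul_def, Ideal.algebraMap_quotient_residueField_mk]

variable {p q l : ℕ} {A : Matrix (Fin p) (Fin q) R} {B : Matrix (Fin q) (Fin l) R}

lemma exact_map_algebraMap_residueField (hAB : Function.Exact B.mulVecLin A.mulVecLin)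
    {P : Ideal R} [P.IsPrime] {s : R} (hs : ∀ c, c ∈ P ↔ c * s = 0) {D : R} (hD : D ∉ P)
    {T : Matrix (Fin l) (Fin q) R} (hT : B * T * B = D • B) :
    Function.Exact (B.map (algebraMap R P.ResidueField)).mulVecLin
      (A.map (algebraMap R P.ResidueField)).mulVecLin := by
  let κ := algebraMap R P.ResidueField
  have hκ {m : ℕ} (w : Fin m → R) : κ ∘ w = 0 ↔ s • w = 0 := by
    simp [funext_iff, κ, hs, mul_comm s]
  intro v
  refine ⟨fun hv => ?_, ?_⟩
  · obtain ⟨c, hc, w, hw⟩ := exists_smul_eq_algebraMap_residueField P v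
    have hAw : κ ∘ (A *ᵥ w) = 0 := by
      rw [← map_mulVec_comp, ← hw, Matrix.mulVec_smul]
      exact smul_eq_zero_of_right c hv
    obtain ⟨u, hu⟩ := (hAB (s • w)).1 (by
      rw [map_smul, Matrix.mulVecLin_apply]
      exact (hκ _).1 hAw)
    have hDw : κ ∘ (D • w - B *ᵥ (T *ᵥ w)) = 0 := by
      rw [hκ, smul_sub, smul_comm, ← Matrix.mulVec_smul, ← Matrix.mulVec_smul, ← hu,
        Matrix.mulVecLin_apply, Matrix.mulVec_mulVec, Matrix.mulVec_mulVec, hT, Matrix.smul_mulVec,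
        sub_self]
    have hDc : κ (D * c) ≠ 0 := by
      rw [Ne, Ideal.algebraMap_residueField_eq_zero]
      exact P.primeCompl.mul_mem hD hc
    have hDcv : κ (D * c) • v = B.map κ *ᵥ (κ ∘ (T *ᵥ w)) := by
      rw [map_mulVec_comp, algebraMap_smul, mul_smul, hw, ← sub_eq_zero, ← hDw]
      ext i
      simp [κ, Algebra.smul_def]
    exact (Submodule.smul_mem_iff (LinearMap.range (B.map κ).mulVecLin) hDc).1 ⟨_, hDcv.symm⟩
  · rintro ⟨u, rfl⟩
    rw [Matrix.mulVecLin_apply, Matrix.mulVecLin_apply, Matrix.mulVec_mulVec, ← Matrix.map_mul,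
      mul_eq_zero_of_exact hAB, Matrix.map_zero _ (map_zero _), Matrix.zero_mulVec]

lemma rankAt_add_rankAt (hAB : Function.Exact B.mulVecLin A.mulVecLin)
    {P : Ideal R} [P.IsPrime] {s : R} (hs : ∀ c, c ∈ P ↔ c * s = 0) {D : R} (hD : D ∉ P)
    {T : Matrix (Fin l) (Fin q) R} (hT : B * T * B = D • B) :
    rankAt P A + rankAt P B = q := by
  have := (A.map (algebraMap R P.ResidueField)).mulVecLin.finrank_range_add_finrank_ker
  rwa [(exact_map_algebraMap_residueField hAB hs hD hT).linearMap_ker_eq,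
    Module.finrank_fin_fun] at this

lemma rankAt_zero (P : Ideal R) [P.IsPrime] : rankAt P (0 : Matrix (Fin p) (Fin q) R) = 0 := by
  rw [rankAt, Matrix.map_zero _ (map_zero _), Matrix.rank_zero]

end RankAtPrime

section Forward

variable {b : ℕ → ℕ} {M : ∀ i, Matrix (Fin (b i)) (Fin (b (i + 1))) R} {n k : ℕ} {r : ℕ → ℕ}

lemma rankAt_add_rankAt_succ (hM : ∀ j ≥ n, M j = 0)
    (hexact : ∀ j < n, k ≤ j → Function.Exact (M (j + 1)).mulVecLin (M j).mulVecLin)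
    {P : Ideal R} [P.IsPrime] {s : R} (hs : ∀ c, c ∈ P ↔ c * s = 0) :
    ∀ j < n, k ≤ j → rankAt P (M j) + rankAt P (M (j + 1)) = b (j + 1) := by
  refine Nat.strong_decreasing_induction ⟨n, fun j hj hj' => by omega⟩ fun j ih hj hkj => ?_
  obtain ⟨D, hD, U, V, hUV⟩ := exists_mul_mul_eq_smul_of_forall_ge (hM (j + 1))
    (fun hj => mul_eq_zero_of_exact (hexact (j + 1) hj (by omega)))
    (fun hj => ih (j + 1) j.lt_succ_self hj (by omega))
    fun i _ => minorsIdeal_rankAt_not_le P (M i)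
  refine rankAt_add_rankAt (hexact j hj hkj) hs hD (T := U * V) ?_
  rw [← hUV, Matrix.mul_assoc, Matrix.mul_assoc, Matrix.mul_assoc]

lemma eq_of_forall_add_succ_eq {r r' : ℕ → ℕ} (hr₀ : ∀ j ≥ n, r j = 0) (hr₀' : ∀ j ≥ n, r' j = 0)
    (h : ∀ j < n, k ≤ j → r j + r (j + 1) = r' j + r' (j + 1)) : ∀ j ≥ k, r j = r' j := by
  refine Nat.strong_decreasing_induction
    ⟨n, fun j hj _ => (hr₀ j hj.le).trans (hr₀' j hj.le).symm⟩ fun j ih hkj => ?_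
  rcases lt_or_ge j n with hj | hj
  · exact Nat.add_right_cancel (ih (j + 1) j.lt_succ_self (by omega) ▸ h j hj hkj)
  · exact (hr₀ j hj).trans (hr₀' j hj).symm

lemma exists_isPrime_forall_mem_iff_mul_eq_zero {P : Ideal R} [IsNoetherianRing R]
    (hP : P ∈ associatedPrimes R R) : P.IsPrime ∧ ∃ s, ∀ c, c ∈ P ↔ c * s = 0 := by
  obtain ⟨hP, s, rfl⟩ := isAssociatedPrime_iff.1 hP
  exact ⟨hP, s, fun c => by rw [Submodule.mem_colon_singleton, Submodule.mem_bot, smul_eq_mul]⟩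

lemma rankAt_eq_of_exact (hM : ∀ j ≥ n, M j = 0)
    (hexact : ∀ j < n, k ≤ j → Function.Exact (M (j + 1)).mulVecLin (M j).mulVecLin)
    (hr₀ : ∀ j ≥ n, r j = 0) (hr : ∀ j < n, k ≤ j → r j + r (j + 1) = b (j + 1))
    {P : Ideal R} [P.IsPrime] {s : R} (hs : ∀ c, c ∈ P ↔ c * s = 0) :
    ∀ j ≥ k, rankAt P (M j) = r j :=
  eq_of_forall_add_succ_eq (n := n) (fun j hj => by rw [hM j hj, rankAt_zero]) hr₀ fun j hj hkj =>
    (rankAt_add_rankAt_succ hM hexact hs j hj hkj).trans (hr j hj hkj).symm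

lemma minorsIdeal_not_le_of_mem_associatedPrimes [IsNoetherianRing R] (hM : ∀ j ≥ n, M j = 0)
    (hexact : ∀ j < n, k ≤ j → Function.Exact (M (j + 1)).mulVecLin (M j).mulVecLin)
    (hr₀ : ∀ j ≥ n, r j = 0) (hr : ∀ j < n, k ≤ j → r j + r (j + 1) = b (j + 1))
    {P : Ideal R} (hP : P ∈ associatedPrimes R R) : ∀ j ≥ k, ¬ minorsIdeal (r j) (M j) ≤ P := by
  obtain ⟨_, s, hs⟩ := exists_isPrime_forall_mem_iff_mul_eq_zero hP
  intro j hj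
  rw [← rankAt_eq_of_exact hM hexact hr₀ hr hs j hj]
  exact minorsIdeal_rankAt_not_le P (M j)

lemma exists_mem_isSMulRegular [IsNoetherianRing R] {I : Ideal R}
    (h : ∀ P ∈ associatedPrimes R R, ¬ I ≤ P) : ∃ x ∈ I, IsSMulRegular R x := by
  by_contra! hI
  have hsub : (I : Set R) ⊆ ⋃ P ∈ associatedPrimes R R, (P : Set R) := by
    rw [biUnion_associatedPrimes_eq_compl_regular]
    exact hI
  obtain ⟨P, hP, hIP⟩ := (Ideal.subset_union_prime_finite (associatedPrimes.finite R R)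
    (f := id) 0 0 fun P hP _ _ => hP.isPrime).1 hsub
  exact h P hP hIP

lemma exact_map_quotient_span_singleton {p q l m : ℕ} {A : Matrix (Fin p) (Fin q) R}
    {B : Matrix (Fin q) (Fin l) R} {C : Matrix (Fin l) (Fin m) R}
    (hBC : Function.Exact C.mulVecLin B.mulVecLin) (hAB : Function.Exact B.mulVecLin A.mulVecLin)
    {x : R} (hx : IsSMulRegular R x) :
    Function.Exact (C.map (Ideal.Quotient.mk (Ideal.span {x}))).mulVecLin
      (B.map (Ideal.Quotient.mk (Ideal.span {x}))).mulVecLin := by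
  let π := Ideal.Quotient.mk (Ideal.span {x})
  have hπ {ι : ℕ} {w : Fin ι → R} (hw : π ∘ w = 0) : ∃ y, w = x • y := by
    choose y hy using fun i => Ideal.mem_span_singleton'.1
      (Ideal.Quotient.eq_zero_iff_mem.1 (congrFun hw i))
    exact ⟨y, funext fun i => by rw [Pi.smul_apply, smul_eq_mul, mul_comm, hy]⟩
  intro v
  refine ⟨fun hv => ?_, ?_⟩
  · obtain ⟨w, rfl⟩ : ∃ w : Fin l → R, π ∘ w = v :=
      Ideal.Quotient.mk_surjective.comp_left v
    rw [Matrix.mulVecLin_apply, map_mulVec_comp] at hv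
    obtain ⟨y, hy⟩ := hπ hv
    have hAy : A *ᵥ y = 0 := by
      refine IsSMulRegular.pi (fun _ => hx) (?_ : x • (A *ᵥ y) = x • 0)
      rw [← Matrix.mulVec_smul, ← hy, Matrix.mulVec_mulVec, mul_eq_zero_of_exact hAB,
        Matrix.zero_mulVec, smul_zero]
    obtain ⟨y', rfl⟩ := (hAB y).1 hAy
    obtain ⟨u, hu⟩ := (hBC (w - x • y')).1 (by
      rw [map_sub, map_smul, ← hy, Matrix.mulVecLin_apply, sub_self])
    refine ⟨π ∘ u, ?_⟩
    rw [Matrix.mulVecLin_apply, map_mulVec_comp, ← Matrix.mulVecLin_apply, hu]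
    ext i
    simp [π, Ideal.Quotient.mk_singleton_self]
  · rintro ⟨u, rfl⟩
    rw [Matrix.mulVecLin_apply, Matrix.mulVecLin_apply, Matrix.mulVec_mulVec, ← Matrix.map_mul,
      mul_eq_zero_of_exact hBC, Matrix.map_zero _ (map_zero _), Matrix.zero_mulVec]

open RingTheory.Sequence in
lemma GradeGE.of_map_quotient_span_singleton {I : Ideal R} {x : R} {m : ℕ} (hxI : x ∈ I)
    (hx : IsSMulRegular R x) (h : GradeGE (I.map (Ideal.Quotient.mk (Ideal.span {x}))) m) :
    GradeGE I (m + 1) := by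
  obtain ⟨ys, hlen, hys, hreg⟩ := h
  choose! g hgI hg using fun y hy =>
    (Ideal.mem_map_iff_of_surjective _ Ideal.Quotient.mk_surjective).1 (hys y hy)
  have hmap : (ys.map g).map (algebraMap R (R ⧸ Ideal.span {x})) = ys := by
    rw [List.map_map]
    exact (List.map_congr_left hg).trans ys.map_id
  have e : QuotSMulTop x R ≃ₗ[R] R ⧸ Ideal.span {x} := Submodule.quotEquivOfEq _ _ (by
    rw [← Submodule.ideal_span_singleton_smul, smul_eq_mul, Ideal.mul_top])
  refine ⟨x :: ys.map g, by simp [hlen], by simpa [hxI] using hgI, ?_⟩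
  rw [isWeaklyRegular_cons_iff, e.isWeaklyRegular_congr,
    ← isWeaklyRegular_map_algebraMap_iff (R ⧸ Ideal.span {x}), hmap]
  exact ⟨hx, hreg⟩

theorem gradeGE_minorsIdeal_of_exact [IsNoetherianRing R] (m : ℕ) (hM : ∀ j ≥ n, M j = 0)
    (hexact : ∀ j < n, k ≤ j → Function.Exact (M (j + 1)).mulVecLin (M j).mulVecLin)
    (hr₀ : ∀ j ≥ n, r j = 0) (hr : ∀ j < n, k ≤ j → r j + r (j + 1) = b (j + 1)) :
    ∀ j < n, k + m ≤ j + 1 → GradeGE (minorsIdeal (r j) (M j)) m := by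
  induction m generalizing R k with
  | zero => exact fun j _ _ => ⟨[], rfl, by simp, .nil R R⟩
  | succ m ih =>
    intro j hj hkj
    obtain ⟨x, hxI, hx⟩ := exists_mem_isSMulRegular fun P hP =>
      minorsIdeal_not_le_of_mem_associatedPrimes hM hexact hr₀ hr hP j (by omega)
    refine .of_map_quotient_span_singleton hxI hx ?_
    rw [map_minorsIdeal]
    refine ih (k := k + 1) (M := fun i => (M i).map (Ideal.Quotient.mk (Ideal.span {x})))
      (fun i hi => by rw [hM i hi, Matrix.map_zero _ (map_zero _)]) (fun i hi hki => ?_)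
      (fun i hi hki => hr i hi (by omega)) j hj (by omega)
    obtain ⟨i, rfl⟩ := Nat.exists_eq_add_of_le' (Nat.zero_lt_of_lt hki)
    exact exact_map_quotient_span_singleton (hexact _ hi (by omega))
      (hexact i (by omega) (by omega)) hx

end Forward

section Rank

lemma eq_zero_of_forall_associatedPrimes [IsNoetherianRing R] {a : R}
    (h : ∀ P ∈ associatedPrimes R R, ∃ D ∉ P, D * a = 0) : a = 0 := by
  by_contra ha
  obtain ⟨P, hP, hle⟩ := exists_le_isAssociatedPrime_of_isNoetherianRing R a ha
  obtain ⟨D, hD, hDa⟩ := h P hP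
  exact hD (hle (Submodule.mem_colon_singleton.2 hDa))

lemma pow_mul_det_submatrix_eq_zero {p q ρ c : ℕ} {A : Matrix (Fin p) (Fin q) R}
    {U : Matrix (Fin q) (Fin ρ) R} {V : Matrix (Fin ρ) (Fin p) R} {D : R}
    (h : A * U * (V * A) = D • A) (hc : ρ < c) (ri : Fin c → Fin p) (ci : Fin c → Fin q) :
    D ^ c * (A.submatrix ri ci).det = 0 := by
  have factored : D • A.submatrix ri ci = (A * U).submatrix ri id * (V * A).submatrix id ci :=
    congrArg (Matrix.submatrix · ri ci) h.symm
  have hdet := det_mul_eq_zero_of_lt (by simpa using hc) ((A * U).submatrix ri id)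
    ((V * A).submatrix id ci)
  rwa [← factored, Matrix.det_smul, Fintype.card_fin] at hdet

lemma matRank_eq_of_forall_associatedPrimes [IsNoetherianRing R] [Nontrivial R] {p q ρ : ℕ}
    {A : Matrix (Fin p) (Fin q) R}
    (hρ : ∀ P ∈ associatedPrimes R R, ¬ minorsIdeal ρ A ≤ P)
    (hA : ∀ P ∈ associatedPrimes R R, ∃ D ∉ P, ∃ (U : Matrix (Fin q) (Fin ρ) R)
      (V : Matrix (Fin ρ) (Fin p) R), A * U * (V * A) = D • A) : matRank A = ρ := by
  refine IsGreatest.csSup_eq ⟨fun h => ?_, fun c hc => le_of_not_gt fun hlt => hc ?_⟩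
  · obtain ⟨P, hP⟩ := associatedPrimes.nonempty R R
    exact hρ P hP (h.le.trans bot_le)
  · refine le_bot_iff.1 (minorsIdeal_le_iff.2 fun ri ci => ?_)
    refine eq_zero_of_forall_associatedPrimes fun P hP => ?_
    obtain ⟨D, hD, U, V, hUV⟩ := hA P hP
    exact ⟨D ^ c, fun h => hD (hP.isPrime.mem_of_pow_mem c h),
      pow_mul_det_submatrix_eq_zero hUV hlt ri ci⟩

variable {b : ℕ → ℕ} {M : ∀ i, Matrix (Fin (b i)) (Fin (b (i + 1))) R} {n : ℕ} {r : ℕ → ℕ}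

lemma matRank_eq_of_exact [IsNoetherianRing R] [Nontrivial R] (hM : ∀ j ≥ n, M j = 0)
    (hexact : ∀ j < n, Function.Exact (M (j + 1)).mulVecLin (M j).mulVecLin)
    (hr₀ : ∀ j ≥ n, r j = 0) (hr : ∀ j < n, r j + r (j + 1) = b (j + 1)) (i : ℕ) :
    matRank (M i) = r i := by
  have hminors (P) (hP : P ∈ associatedPrimes R R) (j) : ¬ minorsIdeal (r j) (M j) ≤ P :=
    minorsIdeal_not_le_of_mem_associatedPrimes hM (fun j hj _ => hexact j hj) hr₀
      (fun j hj _ => hr j hj) hP j j.zero_le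
  refine matRank_eq_of_forall_associatedPrimes (hminors · · i) fun P hP => ?_
  have := hP.isPrime
  exact exists_mul_mul_eq_smul_of_forall_ge (hM i) (fun hi => mul_eq_zero_of_exact (hexact i hi))
    (hr i) fun j _ => hminors P hP j

theorem exact_iff_matRank_add_and_gradeGE [IsNoetherianRing R] [Nontrivial R]
    (hM : ∀ j ≥ n, M j = 0) (hMM : ∀ j, M j * M (j + 1) = 0) :
    (∀ j < n, Function.Exact (M (j + 1)).mulVecLin (M j).mulVecLin) ↔
      ∀ j < n, matRank (M j) + matRank (M (j + 1)) = b (j + 1) ∧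
        GradeGE (minorsIdeal (matRank (M j)) (M j)) (j + 1) := by
  constructor
  · intro hexact j hj
    obtain ⟨P, hP⟩ := associatedPrimes.nonempty R R
    obtain ⟨_, s, hs⟩ := exists_isPrime_forall_mem_iff_mul_eq_zero hP
    have hr₀ (j) (hj : n ≤ j) : rankAt P (M j) = 0 := by rw [hM j hj, rankAt_zero]
    have hr (j) (hj : j < n) : rankAt P (M j) + rankAt P (M (j + 1)) = b (j + 1) :=
      rankAt_add_rankAt_succ hM (fun j hj _ => hexact j hj) hs j hj j.zero_le
    simp only [matRank_eq_of_exact hM hexact hr₀ hr]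
    exact ⟨hr j hj, gradeGE_minorsIdeal_of_exact (j + 1) hM (fun j hj _ => hexact j hj) hr₀
      (fun j hj _ => hr j hj) j hj (Nat.zero_add _).le⟩
  · intro h
    exact exact_of_gradeGE_minorsIdeal hM hMM (fun j hj => by rw [hM j hj, matRank_zero])
      (fun j hj => (h j hj).1) fun j hj => (h j hj).2

end Rank

section Truncation

variable {b : ℕ → ℕ}

/-- The complex `0 → F_n → ⋯ → F_0` as an infinite sequence of matrices: `M i` for `i < n` and `0`
beyond, so that injectivity of the last map becomes exactness at `F_n`. The sizes `b i` for `i > n`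
are kept, which only affects exactness beyond `F_n`. -/
def truncation (n : ℕ) (M : ∀ i, Matrix (Fin (b i)) (Fin (b (i + 1))) R) (i : ℕ) :
    Matrix (Fin (b i)) (Fin (b (i + 1))) R :=
  if i < n then M i else 0

variable {n : ℕ} {M : ∀ i, Matrix (Fin (b i)) (Fin (b (i + 1))) R}

lemma truncation_of_lt {i : ℕ} (hi : i < n) : truncation n M i = M i := if_pos hi

lemma truncation_of_ge {i : ℕ} (hi : n ≤ i) : truncation n M i = 0 := if_neg hi.not_gt

lemma truncation_mul_truncation (h : ∀ i, i + 2 ≤ n → M i * M (i + 1) = 0) (i : ℕ) :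
    truncation n M i * truncation n M (i + 1) = 0 := by
  rcases lt_or_ge (i + 1) n with hi | hi
  · rw [truncation_of_lt hi, truncation_of_lt (by omega), h i hi]
  · rw [truncation_of_ge hi, Matrix.mul_zero]

lemma matRank_truncation_succ [Nontrivial R] {j : ℕ} (hj : j < n) :
    matRank (truncation n M (j + 1)) = if j + 1 = n then 0 else matRank (M (j + 1)) := by
  split_ifs with h
  · rw [truncation_of_ge h.ge, matRank_zero]
  · rw [truncation_of_lt (by omega)]

lemma exact_truncation_iff (hn : 1 ≤ n) :
    (∀ j < n, Function.Exact (truncation n M (j + 1)).mulVecLin (truncation n M j).mulVecLin) ↔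
      (∀ j, j + 2 ≤ n → Function.Exact (M (j + 1)).mulVecLin (M j).mulVecLin) ∧
        Function.Injective (M (n - 1)).mulVecLin := by
  obtain ⟨n, rfl⟩ := Nat.exists_eq_add_of_le' hn
  have hlast : Function.Exact (truncation (n + 1) M (n + 1)).mulVecLin
      (truncation (n + 1) M n).mulVecLin ↔ Function.Injective (M n).mulVecLin := by
    rw [truncation_of_ge le_rfl, truncation_of_lt n.lt_succ_self, Matrix.mulVecLin_zero,
      LinearMap.exact_zero_iff_injective]
  rw [Nat.forall_lt_succ_right, hlast, Nat.add_sub_cancel]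
  refine and_congr_left' (forall_congr' fun j => ?_)
  rw [Nat.add_le_add_iff_right (n := 1) (m := j + 1)]
  refine forall_congr' fun hj => ?_
  rw [truncation_of_lt (by omega), truncation_of_lt (by omega)]

end Truncation

/-- Buchsbaum–Eisenbud acyclicity criterion.  A complex
`0 → F_n → F_{n-1} → ⋯ → F_1 → F_0` of finite free modules over a Noetherian
commutative ring (with `φ_{i+1} : F_{i+1} → F_i` represented by the matrix
`M i`) is exact iff for each `1 ≤ i ≤ n`,
`rank φ_i + rank φ_{i+1} = rank F_i` (with `φ_{n+1} = 0`) and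
`grade I_{rank φ_i}(φ_i) ≥ i`. -/
theorem buchsbaum_eisenbud_acyclicity
    (R : Type*) [CommRing R] [IsNoetherianRing R] [Nontrivial R]
    (n : ℕ) (hn : 1 ≤ n) (b : ℕ → ℕ)
    (M : (i : ℕ) → Matrix (Fin (b i)) (Fin (b (i + 1))) R)
    (hcomplex : ∀ i, i + 2 ≤ n → M i * M (i + 1) = 0) :
    ((∀ j, j + 2 ≤ n →
        Function.Exact (Matrix.mulVecLin (M (j + 1))) (Matrix.mulVecLin (M j))) ∧
      Function.Injective (Matrix.mulVecLin (M (n - 1)))) ↔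
    (∀ j, j + 1 ≤ n →
      matRank (M j) + (if j + 1 = n then 0 else matRank (M (j + 1))) = b (j + 1) ∧
        GradeGE (minorsIdeal (matRank (M j)) (M j)) (j + 1)) := by
  rw [← exact_truncation_iff hn, exact_iff_matRank_add_and_gradeGE
    (fun _ => truncation_of_ge) (truncation_mul_truncation hcomplex)]
  refine forall₂_congr fun j hj => ?_
  rw [truncation_of_lt hj, matRank_truncation_succ hj]
end
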